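/- Let ν be a rational number that is not a negative integer. Then for all but finitely many k ∈ ℤ₊, the Laguerre polynomial L_k^ν is irreducible over ℚ. -/

import Mathlib

open Polynomial Finset

noncomputable section

/-- The Laguerre polynomial `L_k^ν(x) = ∑_{j=0}^{k} binom(ν+k, k−j) (−x)^j / j!`
with rational parameter `ν`, as a polynomial over `ℚ`.  Here the generalized
binomial coefficient is `binom(ν+k, k-j) = (∏_{i<k-j} (ν+k-i)) / (k-j)!`. -/
def laguerre (ν : ℚ) (k : ℕ) : Polynomial ℚ :=
  ∑ j ∈ Finset.range (k + 1),
    Polynomial.C ((∏ i ∈ Finset.range (k - j), (ν + (k : ℚ) - (i : ℚ))) / ((k - j).factorial : ℚ)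
        * (-1) ^ j / (j.factorial : ℚ)) * Polynomial.X ^ j

lemma exists_last_argmin (s : Finset ℕ) (hs : s.Nonempty) (wt : ℕ → ℕ) :
    ∃ a ∈ s, ∀ i ∈ s, wt a ≤ wt i ∧ (a < i → wt a < wt i) := by
  obtain ⟨m, hm, hmin⟩ := s.exists_min_image wt hs
  have hne : (s.filter fun i => wt i = wt m).Nonempty := ⟨m, by simp [hm]⟩
  refine ⟨(s.filter fun i => wt i = wt m).max' hne, ?_, ?_⟩
  · exact (mem_filter.1 (max'_mem _ hne)).1
  · have hw := (mem_filter.1 (max'_mem _ hne)).2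
    intro i hi
    rw [hw]
    refine ⟨hmin i hi, fun hlt => lt_of_le_of_ne (hmin i hi) fun h => ?_⟩
    exact absurd (le_max' _ i (mem_filter.2 ⟨hi, h.symm⟩)) (not_le.2 hlt)

/-- A consequence of the theory of Newton polygons: if all but the `l` top lower-order coefficients
of a monic integer polynomial are divisible by `p`, and all slopes of its `p`-adic Newton polygon
are less than `1 / k`, then it has no monic factor of degree `k > l`. -/
lemma natDegree_ne_of_slope_lt {p : ℕ} (hp : p.Prime) {G H : ℤ[X]} (hG : G.Monic) (hH : H.Monic)
    {l : ℕ} (hl : l < G.natDegree)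
    (hdvd : ∀ j, j < (G * H).natDegree - l → (p : ℤ) ∣ (G * H).coeff j)
    (hc : (G * H).coeff 0 ≠ 0)
    (hslope : ∀ j, 1 ≤ j → (G * H).coeff j ≠ 0 →
      G.natDegree * padicValInt p ((G * H).coeff 0) <
        G.natDegree * padicValInt p ((G * H).coeff j) + j) : False := by
  have : Fact p.Prime := ⟨hp⟩
  set k := G.natDegree with hk
  have hGH : (G * H).natDegree = k + H.natDegree := hG.natDegree_mul hH
  have hc' : G.coeff 0 * H.coeff 0 ≠ 0 := by rwa [mul_coeff_zero] at hc
  have hg0 : G.coeff 0 ≠ 0 := left_ne_zero_of_mul hc'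
  have hh0 : H.coeff 0 ≠ 0 := right_ne_zero_of_mul hc'
  have hpg : (p : ℤ) ∣ G.coeff 0 := by
    have hX : (X : (ZMod p)[X]) ^ (k + H.natDegree - l) ∣
        G.map (Int.castRingHom (ZMod p)) * H.map (Int.castRingHom (ZMod p)) := by
      rw [X_pow_dvd_iff]
      intro d hd
      rw [← Polynomial.map_mul, coeff_map, eq_intCast, ZMod.intCast_zmod_eq_zero_iff_dvd]
      exact hdvd d (by omega)
    by_contra hcon
    have hnX : ¬ (X : (ZMod p)[X]) ∣ G.map (Int.castRingHom (ZMod p)) := by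
      rw [X_dvd_iff, coeff_map, eq_intCast, ZMod.intCast_zmod_eq_zero_iff_dvd]
      exact hcon
    have h1 := prime_X.pow_dvd_of_dvd_mul_left _ hnX hX
    have h2 := natDegree_le_of_dvd h1 (hH.map _).ne_zero
    rw [natDegree_X_pow, hH.natDegree_map] at h2
    omega
  obtain ⟨a, ha, hamin⟩ := exists_last_argmin G.support ⟨0, by simpa using hg0⟩
    (fun i => k * padicValInt p (G.coeff i) + i)
  obtain ⟨b, hb, hbmin⟩ := exists_last_argmin H.support ⟨0, by simpa using hh0⟩
    (fun i => k * padicValInt p (H.coeff i) + i)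
  simp only [mem_support_iff] at ha hb hamin hbmin
  have ha1 : 1 ≤ a := by
    by_contra h0
    obtain rfl : a = 0 := by omega
    have h1 := (hamin k (by rw [hk, hG.coeff_natDegree]; exact one_ne_zero)).2 (by omega)
    rw [hk, hG.coeff_natDegree, ← hk] at h1
    have h2 : 1 ≤ padicValInt p (G.coeff 0) := by
      have := (padicValInt_dvd_iff (p := p) 1 (G.coeff 0)).1 (by simpa using hpg)
      exact this.resolve_left hg0
    simp only [padicValInt.one, mul_zero, zero_add, add_zero] at h1
    nlinarith
  set V := padicValInt p (G.coeff a) + padicValInt p (H.coeff b) with hV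
  have hsum : (p : ℤ) ^ (V + 1) ∣ (G * H).coeff (a + b) - G.coeff a * H.coeff b := by
    rw [coeff_mul, ← Finset.add_sum_erase _ _ (show (a, b) ∈ antidiagonal (a + b) by simp),
      add_sub_cancel_left]
    refine Finset.dvd_sum fun x hx => ?_
    obtain ⟨i, j⟩ := x
    simp only [mem_erase, HasAntidiagonal.mem_antidiagonal, ne_eq, Prod.mk.injEq] at hx
    obtain ⟨hne, hij⟩ := hx
    by_cases hgi : G.coeff i = 0
    · simp [hgi]
    by_cases hhj : H.coeff j = 0
    · simp [hhj]
    rw [padicValInt_dvd_iff]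
    right
    rw [padicValInt.mul hgi hhj]
    have hi := hamin i hgi
    have hj := hbmin j hhj
    have hlt : k * V < k * (padicValInt p (G.coeff i) + padicValInt p (H.coeff j)) := by
      rw [hV, mul_add, mul_add]
      rcases lt_trichotomy i a with h | h | h
      · have := hj.2 (by omega)
        omega
      · exact absurd ⟨h, by omega⟩ hne
      · have := hi.2 h
        omega
    exact lt_of_mul_lt_mul_left hlt (Nat.zero_le _)
  have hnd : ¬ (p : ℤ) ^ (V + 1) ∣ (G * H).coeff (a + b) := by
    intro h
    have h1 : (p : ℤ) ^ (V + 1) ∣ G.coeff a * H.coeff b := by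
      have := dvd_sub h hsum
      rwa [sub_sub_cancel] at this
    rw [padicValInt_dvd_iff, padicValInt.mul ha hb] at h1
    rcases h1 with h1 | h1
    · exact mul_ne_zero ha hb h1
    · omega
  rw [padicValInt_dvd_iff] at hnd
  push Not at hnd
  have h1 := hslope (a + b) (by omega) hnd.1
  have h2 := (hamin 0 hg0).1
  have h3 := (hbmin 0 hh0).1
  rw [mul_coeff_zero, padicValInt.mul hg0 hh0] at h1
  have h4 : k * padicValInt p ((G * H).coeff (a + b)) ≤ k * V :=
    Nat.mul_le_mul_left _ (by omega)
  rw [hV] at h4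
  simp only [mul_add, add_zero] at h1 h2 h3 h4
  omega

/-- The absolute value of the product of the terms `v * i + u` with `a < i ≤ b`. -/
def apProd (v : ℕ) (u : ℤ) (a b : ℕ) : ℕ := ∏ i ∈ Ioc a b, ((v : ℤ) * i + u).natAbs

/-- The number of `i` with `a < i ≤ b` such that `q` divides `v * i + u`. -/
def apCount (v : ℕ) (u : ℤ) (q a b : ℕ) : ℕ := #{i ∈ Ioc a b | (q : ℤ) ∣ (v : ℤ) * (i : ℕ) + u}

lemma apCount_bounds {v q : ℕ} (u : ℤ) (hq : 0 < q) (hqv : q.Coprime v) {a b : ℕ} (hab : a ≤ b) :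
    q * apCount v u q a b + 1 ≤ (b - a) + q ∧ (b - a) + 1 ≤ q * apCount v u q a b + q := by
  have : NeZero q := ⟨hq.ne'⟩
  set c : ℕ := (-(u : ZMod q) * (v : ZMod q)⁻¹).val with hc
  have hv : (v : ZMod q) * (v : ZMod q)⁻¹ = 1 := ZMod.coe_mul_inv_eq_one v hqv.symm
  have hiff : ∀ i : ℕ, (q : ℤ) ∣ (v : ℤ) * i + u ↔ i ≡ c [MOD q] := by
    intro i
    rw [← ZMod.natCast_eq_natCast_iff, ← ZMod.intCast_zmod_eq_zero_iff_dvd, hc,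
      ZMod.natCast_val, ZMod.cast_id]
    push_cast
    constructor
    · intro h
      linear_combination (v : ZMod q)⁻¹ * h - (i : ZMod q) * hv
    · intro h
      rw [h]
      linear_combination -(u : ZMod q) * hv
  have hcard : ((apCount v u q a b : ℕ) : ℤ) =
      max (⌊((b : ℚ) - c) / q⌋ - ⌊((a : ℚ) - c) / q⌋) 0 := by
    rw [apCount]
    simp_rw [hiff]
    exact Nat.Ioc_filter_modEq_card a b hq c
  have hqQ : (0 : ℚ) < q := by exact_mod_cast hq
  have key : ∀ x : ℕ, ∃ f : ℤ, ⌊((x : ℚ) - c) / q⌋ = f ∧ f * q ≤ (x : ℤ) - c ∧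
      (x : ℤ) - c + 1 ≤ f * q + q := by
    intro x
    refine ⟨_, rfl, ?_, ?_⟩
    · have := Int.floor_le (((x : ℚ) - c) / q)
      rw [le_div_iff₀ hqQ] at this
      exact_mod_cast this
    · have := Int.lt_floor_add_one (((x : ℚ) - c) / q)
      rw [div_lt_iff₀ hqQ, add_mul, one_mul] at this
      have h2 : (x : ℤ) - c < ⌊((x : ℚ) - c) / q⌋ * q + q := by exact_mod_cast this
      exact h2
  obtain ⟨f, hf, hf1, hf2⟩ := key b
  obtain ⟨g, hg, hg1, hg2⟩ := key a
  have hgf : g ≤ f := by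
    rw [← hf, ← hg]
    apply Int.floor_le_floor
    gcongr
  rw [hf, hg, max_eq_left (by omega)] at hcard
  zify [hab]
  rw [hcard]
  constructor <;> nlinarith

lemma apProd_ne_zero {v : ℕ} {u : ℤ} (hne : ∀ i : ℕ, 1 ≤ i → (v : ℤ) * i + u ≠ 0) (a b : ℕ) :
    apProd v u a b ≠ 0 := by
  refine Finset.prod_ne_zero_iff.2 fun i hi => ?_
  rw [mem_Ioc] at hi
  exact Int.natAbs_ne_zero.2 (hne i (by omega))

lemma natAbs_mul_add_le (v : ℕ) (u : ℤ) {i b : ℕ} (hi : i ≤ b) :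
    ((v : ℤ) * i + u).natAbs ≤ v * b + u.natAbs := by
  refine (Int.natAbs_add_le _ _).trans (add_le_add_left ?_ _)
  rw [← Nat.cast_mul, Int.natAbs_natCast]
  exact Nat.mul_le_mul_left _ hi

lemma not_dvd_apProd_of_lt {v : ℕ} {u : ℤ} (hne : ∀ i : ℕ, 1 ≤ i → (v : ℤ) * i + u ≠ 0)
    {p K : ℕ} (hp : p.Prime) (h : v * K + u.natAbs < p) : ¬ p ∣ apProd v u 0 K := by
  intro hd
  obtain ⟨i, hi, hdi⟩ := (hp.prime.dvd_finsetProd_iff _).1 hd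
  rw [mem_Ioc] at hi
  exact (h.trans_le (Nat.le_of_dvd (Int.natAbs_pos.2 (hne i hi.1)) hdi)).not_ge
    (natAbs_mul_add_le v u hi.2)

lemma factorization_apProd {v : ℕ} {u : ℤ} (hne : ∀ i : ℕ, 1 ≤ i → (v : ℤ) * i + u ≠ 0)
    {p : ℕ} (hp : p.Prime) {a b M : ℕ} (hM : ∀ i ∈ Ioc a b, ((v : ℤ) * i + u).natAbs ≤ M) :
    (apProd v u a b).factorization p = ∑ r ∈ Ico 1 (Nat.log p M + 1), apCount v u (p ^ r) a b := by
  have hne' : ∀ i ∈ Ioc a b, ((v : ℤ) * i + u).natAbs ≠ 0 := fun i hi => by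
    rw [mem_Ioc] at hi
    exact Int.natAbs_ne_zero.2 (hne i (by omega))
  rw [apProd, Nat.factorization_prod_apply hne']
  have h1 : ∀ i ∈ Ioc a b, ((v : ℤ) * i + u).natAbs.factorization p =
      ∑ r ∈ Ico 1 (Nat.log p M + 1), if ((p ^ r : ℕ) : ℤ) ∣ (v : ℤ) * i + u then 1 else 0 := by
    intro i hi
    rw [Nat.factorization_eq_card_pow_dvd_of_lt hp (Nat.pos_of_ne_zero (hne' i hi))
      ((hM i hi).trans_lt (Nat.lt_pow_succ_log_self hp.one_lt M)), card_filter]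
    simp_rw [Int.natCast_dvd]
  rw [Finset.sum_congr rfl h1, Finset.sum_comm]
  simp_rw [apCount, card_filter]

lemma factorization_apProd_eq_zero {v : ℕ} {u : ℤ} (huv : IsCoprime (v : ℤ) u) {p : ℕ}
    (hp : p.Prime) (hpv : p ∣ v) (a b : ℕ) : (apProd v u a b).factorization p = 0 := by
  apply Nat.factorization_eq_zero_of_not_dvd
  intro h
  obtain ⟨i, -, hi⟩ := (hp.prime.dvd_finsetProd_iff _).1 h
  have hpv' : (p : ℤ) ∣ v := by exact_mod_cast hpv
  rw [← Int.natCast_dvd] at hi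
  have hu : (p : ℤ) ∣ u := (dvd_add_right (hpv'.mul_right _)).1 hi
  have := huv.isUnit_of_dvd' hpv' hu
  rw [Int.isUnit_iff_natAbs_eq, Int.natAbs_natCast] at this
  exact hp.one_lt.ne' this

/-- The `p`-part of a product of `k` terms of an arithmetic progression exceeds that of its first
`K ≥ k` terms by at most the size of the largest term. -/
lemma factorization_apProd_le_add_log {v : ℕ} {u : ℤ} (huv : IsCoprime (v : ℤ) u)
    (hne : ∀ i : ℕ, 1 ≤ i → (v : ℤ) * i + u ≠ 0)
    {p : ℕ} (hp : p.Prime) {a b K M : ℕ} (hab : a ≤ b) (hK : b - a ≤ K) (hKb : K ≤ b)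
    (hM : ∀ i, 1 ≤ i → i ≤ b → ((v : ℤ) * i + u).natAbs ≤ M) :
    (apProd v u a b).factorization p ≤ (apProd v u 0 K).factorization p + Nat.log p M := by
  by_cases hpv : p ∣ v
  · rw [factorization_apProd_eq_zero huv hp hpv]
    exact Nat.zero_le _
  rw [factorization_apProd hne hp (M := M) fun i hi => hM i (by rw [mem_Ioc] at hi; omega)
      (by rw [mem_Ioc] at hi; omega),
    factorization_apProd hne hp (M := M) fun i hi => hM i (by rw [mem_Ioc] at hi; omega)
      (by rw [mem_Ioc] at hi; omega)]
  calc ∑ r ∈ Ico 1 (Nat.log p M + 1), apCount v u (p ^ r) a b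
      ≤ ∑ r ∈ Ico 1 (Nat.log p M + 1), (apCount v u (p ^ r) 0 K + 1) := by
        refine Finset.sum_le_sum fun r _ => ?_
        have hq : 0 < p ^ r := pow_pos hp.pos r
        have hcop : (p ^ r).Coprime v := ((Nat.Prime.coprime_iff_not_dvd hp).2 hpv).pow_left r
        have h1 := (apCount_bounds u hq hcop hab).1
        have h2 := (apCount_bounds u hq hcop (Nat.zero_le K)).2
        have h3 : p ^ r * apCount v u (p ^ r) a b < p ^ r * (apCount v u (p ^ r) 0 K + 2) := by
          rw [mul_add]
          omega
        have := lt_of_mul_lt_mul_left h3 (Nat.zero_le _)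
        omega
    _ = _ := by simp [Finset.sum_add_distrib]

lemma factorization_apProd_le_of_lt_sq {v : ℕ} {u : ℤ} (huv : IsCoprime (v : ℤ) u)
    (hne : ∀ i : ℕ, 1 ≤ i → (v : ℤ) * i + u ≠ 0)
    {p : ℕ} (hp : p.Prime) {a b K M : ℕ} (hab : a ≤ b) (hp1 : b - a ≤ p)
    (hpM : M < p ^ 2) (hM : ∀ i, 1 ≤ i → i ≤ b → ((v : ℤ) * i + u).natAbs ≤ M)
    (hdvd : p ∣ apProd v u a b → p ∣ apProd v u 0 K) :
    (apProd v u a b).factorization p ≤ (apProd v u 0 K).factorization p := by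
  by_cases hpv : p ∣ v
  · rw [factorization_apProd_eq_zero huv hp hpv]
    exact Nat.zero_le _
  by_cases h : p ∣ apProd v u a b
  · have h1 : 1 ≤ (apProd v u 0 K).factorization p :=
      (hp.dvd_iff_one_le_factorization (apProd_ne_zero hne _ _)).1 (hdvd h)
    refine le_trans ?_ h1
    rw [factorization_apProd hne hp (M := M) fun i hi => hM i (by rw [mem_Ioc] at hi; omega)
      (by rw [mem_Ioc] at hi; omega)]
    have hlog : Nat.log p M < 2 := Nat.log_lt_of_lt_pow' (by norm_num) hpM
    have hcop : (p ^ 1).Coprime v := ((Nat.Prime.coprime_iff_not_dvd hp).2 hpv).pow_left 1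
    have h2 := (apCount_bounds u (pow_pos hp.pos 1) hcop hab).1
    have h3 : p ^ 1 * apCount v u (p ^ 1) a b < p ^ 1 * 2 := by
      rw [pow_one] at h2 ⊢
      omega
    have h4 := lt_of_mul_lt_mul_left h3 (Nat.zero_le _)
    calc _ ≤ ∑ r ∈ Ico 1 2, apCount v u (p ^ r) a b :=
          Finset.sum_le_sum_of_subset (Ico_subset_Ico_right (by omega))
      _ ≤ 1 := by
          rw [pow_one] at h4
          simp
          omega
  · rw [Nat.factorization_eq_zero_of_not_dvd h]
    exact Nat.zero_le _

/-- If a prime `p > K` does not divide the first `K = k + (1 + v + |u|)` terms of the progression,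
then all its product's initial segments have small `p`-adic valuation. -/
lemma mul_factorization_apProd_lt {v : ℕ} {u : ℤ} (hne : ∀ i : ℕ, 1 ≤ i → (v : ℤ) * i + u ≠ 0)
    {p k K : ℕ} (hp : p.Prime) (hpv : ¬ p ∣ v) (hK : K = k + (1 + v + u.natAbs)) (hpK : K < p)
    (hdvd : ¬ p ∣ apProd v u 0 K) {j : ℕ} (hj : 1 ≤ j) :
    k * (apProd v u 0 j).factorization p < j := by
  set C := 1 + v + u.natAbs with hC
  rcases le_or_gt j K with hjK | hjK
  · have : ¬ p ∣ apProd v u 0 j := fun h =>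
      hdvd (h.trans (Finset.prod_dvd_prod_of_subset _ _ _ (Ioc_subset_Ioc_right hjK)))
    rw [Nat.factorization_eq_zero_of_not_dvd this]
    omega
  have hcop : ∀ r, (p ^ r).Coprime v := fun r =>
    ((Nat.Prime.coprime_iff_not_dvd hp).2 hpv).pow_left r
  set M := v * j + u.natAbs with hM
  have hMC : M ≤ (v + u.natAbs) * j := by
    rw [hM, add_mul]
    exact Nat.add_le_add_left (Nat.le_mul_of_pos_right _ hj) _
  have hfac := factorization_apProd hne hp (a := 0) (b := j) (M := M) fun i hi =>
    natAbs_mul_add_le v u (mem_Ioc.1 hi).2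
  have h1 : (K + 1) * apCount v u (p ^ 1) 0 j ≤ j := by
    have h0 : apCount v u (p ^ 1) 0 j = apCount v u (p ^ 1) K j := by
      unfold apCount
      congr 1
      ext i
      simp only [mem_filter, mem_Ioc]
      constructor
      · rintro ⟨⟨h1, h2⟩, h3⟩
        refine ⟨⟨?_, h2⟩, h3⟩
        by_contra hle
        apply hdvd
        rw [pow_one, Int.natCast_dvd] at h3
        exact h3.trans (Finset.dvd_prod_of_mem (fun i : ℕ => ((v : ℤ) * i + u).natAbs)
          (mem_Ioc.2 ⟨h1, by omega⟩))
      · rintro ⟨⟨h1, h2⟩, h3⟩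
        exact ⟨⟨by omega, h2⟩, h3⟩
    have h2 := (apCount_bounds u (pow_pos hp.pos 1) (hcop 1) hjK.le).1
    rw [h0]
    rcases Nat.eq_zero_or_pos (apCount v u (p ^ 1) K j) with h | h
    · rw [h, mul_zero]
      exact Nat.zero_le _
    · obtain ⟨c, hc⟩ := Nat.exists_eq_add_of_lt h
      rw [hc] at h2 ⊢
      have h3 : (K + 1) * c ≤ p * c := Nat.mul_le_mul_right _ hpK
      have h4 : p ^ 1 * (0 + c + 1) = p * c + p := by ring
      have h5 : p ^ 1 = p := pow_one p
      have h6 : (K + 1) * (0 + c + 1) = (K + 1) * c + K + 1 := by ring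
      omega
  have hpQ : (0 : ℚ) < p := by exact_mod_cast hp.pos
  have h2 : ∀ r ∈ Ico 2 (Nat.log p M + 1),
      (apCount v u (p ^ r) 0 j : ℚ) ≤ C * j * (1 / p : ℚ) ^ r := by
    intro r hr
    rw [mem_Ico] at hr
    have h3 := (apCount_bounds u (pow_pos hp.pos r) (hcop r) (Nat.zero_le j)).1
    have h4 : p ^ r ≤ M := Nat.pow_le_of_le_log (by
      rintro h; rw [h] at hr; simp at hr; omega) (by omega)
    have h5 : p ^ r * apCount v u (p ^ r) 0 j ≤ C * j := by
      rw [hC, add_assoc, add_mul, one_mul]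
      omega
    rw [one_div, inv_pow, ← div_eq_mul_inv, le_div_iff₀ (by positivity)]
    rw [mul_comm]
    exact_mod_cast h5
  have hK1 : 1 ≤ K := by omega
  have hKQ : (1 : ℚ) ≤ K := by exact_mod_cast hK1
  have hpKQ : (K : ℚ) + 1 ≤ p := by exact_mod_cast hpK
  have hgeom : ∑ r ∈ Ico 2 (Nat.log p M + 1), (1 / p : ℚ) ^ r ≤ 1 / (K * (K + 1)) := by
    refine (geom_sum_Ico_le_of_lt_one (by positivity) ?_).trans ?_
    · rw [div_lt_one hpQ]; linarith
    · have : (1 / p : ℚ) ^ 2 / (1 - 1 / p) = 1 / (p * (p - 1)) := by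
        have : (p : ℚ) - 1 ≠ 0 := by intro h; linarith
        field_simp
      rw [this]
      apply one_div_le_one_div_of_le (by positivity)
      nlinarith
  have htotal : ((apProd v u 0 j).factorization p : ℚ) ≤ j / (K + 1) + C * j / (K * (K + 1)) := by
    calc ((apProd v u 0 j).factorization p : ℚ)
        ≤ ((apCount v u (p ^ 1) 0 j + ∑ r ∈ Ico 2 (Nat.log p M + 1), apCount v u (p ^ r) 0 j : ℕ)
            : ℚ) := by
          rw [hfac]
          norm_cast
          rcases Nat.eq_zero_or_pos (Nat.log p M) with h | h
          · simp [h]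
          · rw [Finset.sum_eq_sum_Ico_succ_bot (by omega)]
      _ ≤ _ := by
          push_cast
          gcongr ?_ + ?_
          · rw [le_div_iff₀ (by positivity), mul_comm]
            exact_mod_cast h1
          · calc _ ≤ ∑ r ∈ Ico 2 (Nat.log p M + 1), C * j * (1 / p : ℚ) ^ r :=
                  Finset.sum_le_sum h2
              _ ≤ C * j * (1 / (K * (K + 1))) := by
                  rw [← Finset.mul_sum]
                  gcongr
              _ = _ := by ring
  have hjQ : (0 : ℚ) < j := by exact_mod_cast hj
  have hKk : (K : ℚ) = k + C := by exact_mod_cast hK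
  have hCQ : (1 : ℚ) ≤ C := by exact_mod_cast (by omega : 1 ≤ C)
  have hk0 : (0 : ℚ) ≤ k := by positivity
  have hfin : (k : ℚ) * (j / (K + 1) + C * j / (K * (K + 1))) < j := by
    have : (k : ℚ) * (j / (K + 1) + C * j / (K * (K + 1))) = j * (k * (K + C)) / (K * (K + 1)) := by
      field_simp
    rw [this, div_lt_iff₀ (by positivity)]
    apply mul_lt_mul_of_pos_left _ hjQ
    rw [hKk]
    nlinarith [mul_nonneg hk0 (sub_nonneg.2 hCQ)]
  have := lt_of_le_of_lt (mul_le_mul_of_nonneg_left htotal hk0) hfin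
  exact_mod_cast this

/-- The product of the numbers `r * s - 1` with `1 ≤ s ≤ i`. -/
def prodMulSubOne (r i : ℕ) : ℝ := ∏ s ∈ range i, ((r : ℝ) * (s + 1) - 1)

/-- The product of the numbers `r * s + 1` with `0 ≤ s ≤ i`. -/
def prodMulAddOne (r i : ℕ) : ℝ := ∏ s ∈ range (i + 1), ((r : ℝ) * s + 1)

/-- The coefficients of the diagonal Padé approximants to `x ↦ x ^ (1 / r)` at `1`. -/
def padeCoeff (r m i : ℕ) : ℝ :=
  -((r : ℝ) ^ m * prodMulSubOne r m * prodMulAddOne r m /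
    (prodMulSubOne r i * (m - i).factorial * (prodMulAddOne r (m - i) * i.factorial)))

lemma prodMulSubOne_pos {r : ℕ} (hr : 2 ≤ r) (i : ℕ) : 0 < prodMulSubOne r i := by
  refine Finset.prod_pos fun s _ => ?_
  have : (2 : ℝ) ≤ r := by exact_mod_cast hr
  nlinarith [(Nat.cast_nonneg s : (0 : ℝ) ≤ s)]

lemma prodMulAddOne_pos (r i : ℕ) : 0 < prodMulAddOne r i :=
  Finset.prod_pos fun s _ => by positivity

lemma pow_mul_prod_range (c : ℝ) (f : ℕ → ℝ) (n : ℕ) :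
    c ^ n * ∏ i ∈ range n, f i = ∏ i ∈ range n, c * f i := by
  rw [prod_mul_distrib, prod_const, card_range]

lemma prod_range_erase_split (h : ℕ → ℝ) (i t : ℕ) :
    ∏ j ∈ (range (i + t + 1)).erase i, h j =
      (∏ j ∈ range i, h j) * ∏ s ∈ range t, h (i + 1 + s) := by
  have : (range (i + t + 1)).erase i = range i ∪ Ico (i + 1) (i + 1 + t) := by
    ext j
    simp only [mem_erase, mem_range, mem_union, mem_Ico]
    omega
  rw [this, prod_union, prod_Ico_eq_prod_range, Nat.add_sub_cancel_left]
  rw [Finset.disjoint_left]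
  intro j hj
  simp only [mem_range, mem_Ico] at *
  omega

lemma prod_range_split (h : ℕ → ℝ) (i t : ℕ) :
    ∏ j ∈ range (i + t + 1), h j = (∏ j ∈ range i, h j) * ∏ s ∈ range (t + 1), h (i + s) := by
  rw [add_assoc, prod_range_add]

lemma prod_erase_diff (r i t : ℕ) :
    ∏ j ∈ (range (i + t + 1)).erase i, ((r : ℝ) * i - r * j) =
      (-1) ^ t * (r : ℝ) ^ (i + t) * (i.factorial * t.factorial) := by
  rw [prod_range_erase_split, ← prod_range_reflect]
  have h1 : ∏ j ∈ range i, ((r : ℝ) * i - r * (i - 1 - j : ℕ)) = r ^ i * i.factorial := by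
    rw [← prod_range_add_one_eq_factorial, Nat.cast_prod, pow_mul_prod_range]
    refine prod_congr rfl fun j hj => ?_
    rw [mem_range] at hj
    rw [Nat.sub_sub, Nat.cast_sub (by omega)]
    push_cast
    ring
  have h2 : ∏ s ∈ range t, ((r : ℝ) * i - r * (i + 1 + s : ℕ)) =
      (-1) ^ t * r ^ t * t.factorial := by
    rw [← prod_range_add_one_eq_factorial, Nat.cast_prod, ← mul_pow, pow_mul_prod_range]
    refine prod_congr rfl fun j hj => ?_
    push_cast
    ring
  rw [h1, h2]
  ring

lemma prod_diff_sub_one (r i t : ℕ) :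
    ∏ j ∈ range (i + t + 1), ((r : ℝ) * i - (r * j + 1)) =
      (-1) ^ (t + 1) * (prodMulSubOne r i * prodMulAddOne r t) := by
  rw [prod_range_split, ← prod_range_reflect]
  have h1 : ∏ j ∈ range i, ((r : ℝ) * i - (r * (i - 1 - j : ℕ) + 1)) = prodMulSubOne r i := by
    refine prod_congr rfl fun j hj => ?_
    rw [mem_range] at hj
    rw [Nat.sub_sub, Nat.cast_sub (by omega)]
    push_cast
    ring
  have h2 : ∏ s ∈ range (t + 1), ((r : ℝ) * i - (r * (i + s : ℕ) + 1)) =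
      (-1) ^ (t + 1) * prodMulAddOne r t := by
    rw [prodMulAddOne, pow_mul_prod_range]
    refine prod_congr rfl fun j hj => ?_
    push_cast
    ring
  rw [h1, h2]
  ring

lemma prod_diff_add_one (r i t : ℕ) :
    ∏ j ∈ range (i + t + 1), ((r : ℝ) * i + 1 - r * j) =
      (-1) ^ t * (prodMulAddOne r i * prodMulSubOne r t) := by
  have hsplit : ∏ j ∈ range (i + t + 1), ((r : ℝ) * i + 1 - r * j) =
      (∏ j ∈ range (i + 1), ((r : ℝ) * i + 1 - r * j)) *
        ∏ s ∈ range t, ((r : ℝ) * i + 1 - r * (i + 1 + s : ℕ)) := by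
    rw [show i + t + 1 = i + 1 + t by ring, prod_range_add]
  rw [hsplit, ← prod_range_reflect]
  have h1 : ∏ j ∈ range (i + 1), ((r : ℝ) * i + 1 - r * (i + 1 - 1 - j : ℕ)) =
      prodMulAddOne r i := by
    refine prod_congr rfl fun j hj => ?_
    rw [mem_range] at hj
    rw [Nat.add_sub_cancel, Nat.cast_sub (by omega)]
    ring
  have h2 : ∏ s ∈ range t, ((r : ℝ) * i + 1 - r * (i + 1 + s : ℕ)) =
      (-1) ^ t * prodMulSubOne r t := by
    rw [prodMulSubOne, pow_mul_prod_range]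
    refine prod_congr rfl fun j hj => ?_
    push_cast
    ring
  rw [h1, h2]
  ring

/-- The divided difference of a polynomial of degree at most `2 * m` at the `2 * m + 2` nodes
`r * i` and `r * i + 1` vanishes. -/
lemma sum_padeCoeff_eval {r : ℕ} (hr : 2 ≤ r) (m : ℕ) {p : ℝ[X]} (hp : p.natDegree ≤ 2 * m) :
    ∑ i ∈ range (m + 1), padeCoeff r m i * p.eval ((r * i : ℕ) : ℝ) =
      ∑ i ∈ range (m + 1), padeCoeff r m (m - i) * p.eval ((r * i + 1 : ℕ) : ℝ) := by
  set node : ℕ ⊕ ℕ → ℝ := Sum.elim (fun i => ((r * i : ℕ) : ℝ)) (fun i => ((r * i + 1 : ℕ) : ℝ))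
    with hnode
  set S := (range (m + 1)).disjSum (range (m + 1)) with hS
  have hcard : #S = 2 * m + 2 := by rw [hS, card_disjSum, card_range]; ring
  have hinj : Set.InjOn node S := by
    have hmod : ∀ a b : ℕ, r * a ≠ r * b + 1 := by
      intro a b h
      have : r ∣ 1 := (Nat.dvd_add_right (Dvd.intro b rfl)).1 (h ▸ Dvd.intro a rfl)
      have := Nat.le_of_dvd one_pos this
      omega
    have hr0 : r ≠ 0 := by omega
    rintro (a | a) - (b | b) - hab
    · simpa [hnode, hr0] using hab
    · exact absurd (Nat.cast_injective hab) (hmod a b)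
    · exact absurd (Nat.cast_injective hab.symm) (hmod b a)
    · simpa [hnode, hr0] using hab
  have hlag := Lagrange.coeff_eq_sum hinj (P := p) (by
    rw [hcard]
    exact degree_le_natDegree.trans_lt (by exact_mod_cast (by omega)))
  rw [hcard, coeff_eq_zero_of_natDegree_lt (by omega), hS, sum_disjSum] at hlag
  have hr0 : (r : ℝ) ≠ 0 := by positivity
  have hl : ∀ i ∈ range (m + 1), padeCoeff r m i = (r : ℝ) ^ (2 * m) * prodMulSubOne r m *
      prodMulAddOne r m / ∏ j ∈ S.erase (Sum.inl i), (node (Sum.inl i) - node j) := by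
    intro i hi
    have hi' : i ≤ m := by rw [mem_range] at hi; omega
    obtain ⟨t, rfl⟩ := Nat.exists_eq_add_of_le hi'
    have : S.erase (Sum.inl i) = ((range (i + t + 1)).erase i).disjSum (range (i + t + 1)) := by
      ext (j | j) <;> simp [hS]
    rw [this, prod_disjSum]
    simp only [hnode, Sum.elim_inl, Sum.elim_inr]
    push_cast
    rw [prod_erase_diff, prod_diff_sub_one, padeCoeff, Nat.add_sub_cancel_left]
    have h1 := (prodMulSubOne_pos hr i).ne'
    have h2 := (prodMulAddOne_pos r t).ne'
    have h3 : (i.factorial : ℝ) ≠ 0 := by positivity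
    have h4 : (t.factorial : ℝ) ≠ 0 := by positivity
    have h5 : ((-1 : ℝ)) ^ t * (-1) ^ t = 1 := by rw [← mul_pow]; simp
    rw [show (-1 : ℝ) ^ t * (r : ℝ) ^ (i + t) * (i.factorial * t.factorial) *
      ((-1) ^ (t + 1) * (prodMulSubOne r i * prodMulAddOne r t)) =
      -(((-1 : ℝ) ^ t * (-1) ^ t) * (r : ℝ) ^ (i + t) * (i.factorial * t.factorial) *
      (prodMulSubOne r i * prodMulAddOne r t)) by ring, h5, two_mul, pow_add]
    field_simp
    ring
  have hrr : ∀ i ∈ range (m + 1), padeCoeff r m (m - i) = -((r : ℝ) ^ (2 * m) * prodMulSubOne r m *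
      prodMulAddOne r m / ∏ j ∈ S.erase (Sum.inr i), (node (Sum.inr i) - node j)) := by
    intro i hi
    have hi' : i ≤ m := by rw [mem_range] at hi; omega
    obtain ⟨t, rfl⟩ := Nat.exists_eq_add_of_le hi'
    have : S.erase (Sum.inr i) = (range (i + t + 1)).disjSum ((range (i + t + 1)).erase i) := by
      ext (j | j) <;> simp [hS]
    rw [this, prod_disjSum]
    simp only [hnode, Sum.elim_inl, Sum.elim_inr]
    push_cast
    simp only [add_sub_add_right_eq_sub]
    rw [prod_erase_diff, prod_diff_add_one, padeCoeff, Nat.add_sub_cancel_left, Nat.add_sub_cancel]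
    have h1 := (prodMulSubOne_pos hr t).ne'
    have h2 := (prodMulAddOne_pos r i).ne'
    have h3 : (i.factorial : ℝ) ≠ 0 := by positivity
    have h4 : (t.factorial : ℝ) ≠ 0 := by positivity
    have h5 : ((-1 : ℝ)) ^ t * (-1) ^ t = 1 := by rw [← mul_pow]; simp
    rw [show (-1 : ℝ) ^ t * (prodMulAddOne r i * prodMulSubOne r t) *
      ((-1) ^ t * (r : ℝ) ^ (i + t) * (i.factorial * t.factorial)) =
      (((-1 : ℝ) ^ t * (-1) ^ t) * (r : ℝ) ^ (i + t) * (i.factorial * t.factorial) *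
      (prodMulAddOne r i * prodMulSubOne r t)) by ring, h5, two_mul, pow_add]
    field_simp
    ring
  rw [sum_congr rfl fun i hi => congrArg (· * p.eval ((r * i : ℕ) : ℝ)) (hl i hi),
    sum_congr rfl fun i hi => congrArg (· * p.eval ((r * i + 1 : ℕ) : ℝ)) (hrr i hi)]
  have := congrArg (fun x => (r : ℝ) ^ (2 * m) * prodMulSubOne r m * prodMulAddOne r m * x) hlag
  simp only [mul_zero, mul_add, mul_sum] at this
  rw [← sub_eq_zero, this, ← sum_sub_distrib, ← sum_add_distrib]
  refine sum_congr rfl fun i _ => ?_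
  simp only [hnode, Sum.elim_inl, Sum.elim_inr]
  ring

lemma factorial_dvd_pow_mul_prod (r b t : ℕ) :
    t.factorial ∣ r ^ t * ∏ i ∈ range t, (b + r * i) := by
  refine (Nat.dvd_iff_prime_pow_dvd_dvd _ _).2 fun p a hp hpa => ?_
  by_cases hpr : p ∣ r
  · have hat : a ≤ t := by
      rcases Nat.eq_zero_or_pos t with rfl | ht
      · by_contra h
        exact (Nat.one_lt_pow (n := a) (by omega) hp.one_lt).ne'
          (Nat.dvd_one.1 (by simpa using hpa))
      · have : Fact p.Prime := ⟨hp⟩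
        have h1 := (padicValNat_dvd_iff_le (Nat.factorial_ne_zero t)).1 hpa
        have h2 := sub_one_mul_padicValNat_factorial_lt_of_ne_zero p ht.ne'
        have h3 : padicValNat p t.factorial ≤ (p - 1) * padicValNat p t.factorial :=
          Nat.le_mul_of_pos_left _ (by have := hp.one_lt; omega)
        omega
    exact Dvd.dvd.mul_right ((pow_dvd_pow_of_dvd hpr a).trans (pow_dvd_pow r hat)) _
  · have hcop : r.Coprime (p ^ a) :=
      (((Nat.Prime.coprime_iff_not_dvd hp).2 hpr).pow_left a).symm
    set c : ℕ := ((b : ZMod (p ^ a)) * (r : ZMod (p ^ a))⁻¹).val with hc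
    have : NeZero (p ^ a) := ⟨(pow_pos hp.pos a).ne'⟩
    have hrc : (r : ZMod (p ^ a)) * c = b := by
      rw [hc, ZMod.natCast_val, ZMod.cast_id, mul_comm, mul_assoc, mul_comm _ (r : ZMod (p ^ a)),
        ZMod.coe_mul_inv_eq_one r hcop, mul_one]
    refine Dvd.dvd.mul_left ?_ _
    rw [← ZMod.natCast_eq_zero_iff]
    have h1 : ((∏ i ∈ range t, (b + r * i) : ℕ) : ZMod (p ^ a)) =
        ((r ^ t * c.ascFactorial t : ℕ) : ZMod (p ^ a)) := by
      rw [Nat.ascFactorial_eq_prod_range,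
        show r ^ t * ∏ i ∈ range t, (c + i) = ∏ i ∈ range t, r * (c + i) by
        rw [prod_mul_distrib, prod_const, card_range]]
      push_cast
      refine prod_congr rfl fun i _ => ?_
      rw [← hrc]
      ring
    rw [h1, ZMod.natCast_eq_zero_iff]
    exact Dvd.dvd.mul_left (hpa.trans (Nat.factorial_dvd_ascFactorial c t)) _

lemma exists_padeCoeff_eq_neg {r : ℕ} (hr : 2 ≤ r) {m i : ℕ} (hi : i ≤ m) :
    ∃ z : ℕ, padeCoeff r m i = -z ∧ z ≤ (4 * r * (r + 1)) ^ m := by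
  obtain ⟨t, rfl⟩ := Nat.exists_eq_add_of_le hi
  obtain ⟨x, hx⟩ := factorial_dvd_pow_mul_prod r (r * (i + 1) - 1) t
  obtain ⟨y, hy⟩ := factorial_dvd_pow_mul_prod r (r * (t + 1) + 1) i
  have hP : prodMulSubOne r (i + t) =
      prodMulSubOne r i * (∏ s ∈ range t, (r * (i + 1) - 1 + r * s) : ℕ) := by
    rw [prodMulSubOne, prod_range_add, prodMulSubOne, Nat.cast_prod]
    congr 1
    refine prod_congr rfl fun s _ => ?_
    have : 1 ≤ r * (i + 1) := Nat.mul_pos (by omega) (by omega)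
    push_cast [Nat.cast_sub this]
    ring
  have hQ : prodMulAddOne r (i + t) =
      prodMulAddOne r t * (∏ s ∈ range i, (r * (t + 1) + 1 + r * s) : ℕ) := by
    rw [prodMulAddOne, show i + t + 1 = t + 1 + i by ring, prod_range_add, prodMulAddOne,
      Nat.cast_prod]
    congr 1
    refine prod_congr rfl fun s _ => ?_
    push_cast
    ring
  refine ⟨x * y, ?_, ?_⟩
  · have hx' : (r : ℝ) ^ t * (∏ s ∈ range t, (r * (i + 1) - 1 + r * s) : ℕ) = t.factorial * x := by
      exact_mod_cast hx
    have hy' : (r : ℝ) ^ i * (∏ s ∈ range i, (r * (t + 1) + 1 + r * s) : ℕ) = i.factorial * y := by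
      exact_mod_cast hy
    have h1 := (prodMulSubOne_pos hr i).ne'
    have h2 := (prodMulAddOne_pos r t).ne'
    rw [padeCoeff, Nat.add_sub_cancel_left, hP, hQ, neg_inj, div_eq_iff (by positivity)]
    push_cast at *
    linear_combination prodMulSubOne r i * prodMulAddOne r t *
      ((r : ℝ) ^ i * (∏ s ∈ range i, ((r : ℝ) * (t + 1) + 1 + r * s)) * hx' +
        t.factorial * x * hy')
  · have hx2 : x ≤ r ^ t * r ^ t * 2 ^ (i + t) := by
      refine Nat.le_of_mul_le_mul_left ?_ t.factorial_pos
      rw [← hx]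
      calc r ^ t * ∏ s ∈ range t, (r * (i + 1) - 1 + r * s)
          ≤ r ^ t * ∏ s ∈ range t, r * (i + 1 + s) := by
            gcongr with s
            rw [mul_add r (i + 1) s]
            omega
        _ = r ^ t * (r ^ t * (t.factorial * (i + t).choose t)) := by
            rw [prod_mul_distrib, prod_const, card_range, ← Nat.ascFactorial_eq_prod_range,
              Nat.ascFactorial_eq_factorial_mul_choose]
        _ ≤ r ^ t * (r ^ t * (t.factorial * 2 ^ (i + t))) := by
            gcongr
            exact Nat.choose_le_two_pow _ _
        _ = _ := by ring
    have hy2 : y ≤ r ^ i * (r + 1) ^ i * 2 ^ (i + t) := by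
      refine Nat.le_of_mul_le_mul_left ?_ i.factorial_pos
      rw [← hy]
      calc r ^ i * ∏ s ∈ range i, (r * (t + 1) + 1 + r * s)
          ≤ r ^ i * ∏ s ∈ range i, (r + 1) * (t + 1 + s) := by
            gcongr with s
            nlinarith
        _ = r ^ i * ((r + 1) ^ i * (i.factorial * (t + i).choose i)) := by
            rw [prod_mul_distrib, prod_const, card_range, ← Nat.ascFactorial_eq_prod_range,
              Nat.ascFactorial_eq_factorial_mul_choose]
        _ ≤ r ^ i * ((r + 1) ^ i * (i.factorial * 2 ^ (t + i))) := by
            gcongr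
            exact Nat.choose_le_two_pow _ _
        _ = _ := by ring
    calc x * y ≤ (r ^ t * r ^ t * 2 ^ (i + t)) * (r ^ i * (r + 1) ^ i * 2 ^ (i + t)) :=
          Nat.mul_le_mul hx2 hy2
      _ ≤ (r ^ t * (r + 1) ^ t * 2 ^ (i + t)) * (r ^ i * (r + 1) ^ i * 2 ^ (i + t)) := by
          gcongr
          omega
      _ = (4 * r * (r + 1)) ^ (i + t) := by
          rw [show 4 * r * (r + 1) = r * (r + 1) * (2 * 2) by ring]
          simp only [mul_pow, pow_add]
          ring

/-- The numerator of the diagonal Padé approximant to `x ↦ x ^ (1 / r)` at `1`. -/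
def padeNum (r m : ℕ) : ℝ[X] := ∑ i ∈ range (m + 1), C (padeCoeff r m i) * X ^ i

/-- The denominator of the diagonal Padé approximant to `x ↦ x ^ (1 / r)` at `1`. -/
def padeDen (r m : ℕ) : ℝ[X] := ∑ i ∈ range (m + 1), C (padeCoeff r m (m - i)) * X ^ i

/-- The remainder polynomial `A (w ^ r) - w * B (w ^ r)` of the Padé approximation. -/
def padeRem (r m : ℕ) : ℝ[X] := (padeNum r m).comp (X ^ r) - X * (padeDen r m).comp (X ^ r)

lemma natDegree_padeNum_le (r m : ℕ) : (padeNum r m).natDegree ≤ m :=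
  natDegree_sum_le_of_forall_le _ _ fun i hi =>
    (natDegree_C_mul_X_pow_le _ _).trans (by rw [mem_range] at hi; omega)

lemma natDegree_padeDen_le (r m : ℕ) : (padeDen r m).natDegree ≤ m :=
  natDegree_sum_le_of_forall_le _ _ fun i hi =>
    (natDegree_C_mul_X_pow_le _ _).trans (by rw [mem_range] at hi; omega)

lemma abs_padeCoeff_le {r : ℕ} (hr : 2 ≤ r) {m i : ℕ} (hi : i ≤ m) :
    |padeCoeff r m i| ≤ (4 * r * (r + 1)) ^ m := by
  obtain ⟨z, hz, hle⟩ := exists_padeCoeff_eq_neg hr hi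
  rw [hz, abs_neg, Nat.abs_cast]
  exact_mod_cast hle

lemma coeff_padeRem_comp (r m d : ℕ) : ((padeRem r m).comp (X + 1)).coeff d =
    ∑ i ∈ range (m + 1), padeCoeff r m i * ((r * i).choose d : ℝ) -
      ∑ i ∈ range (m + 1), padeCoeff r m (m - i) * ((r * i + 1).choose d : ℝ) := by
  have h1 : (padeRem r m).comp (X + 1) =
      ∑ i ∈ range (m + 1), C (padeCoeff r m i) * (X + 1) ^ (r * i) -
        ∑ i ∈ range (m + 1), C (padeCoeff r m (m - i)) * (X + 1) ^ (r * i + 1) := by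
    have hcomp : ∀ i, ((X ^ i : ℝ[X]).comp (X ^ r)).comp (X + 1) = (X + 1) ^ (r * i) := fun i => by
      rw [X_pow_comp, ← pow_mul, X_pow_comp]
    rw [padeRem, padeNum, padeDen, sub_comp, mul_comp, X_comp, Polynomial.sum_comp,
      Polynomial.sum_comp, Polynomial.sum_comp, Polynomial.sum_comp, mul_sum]
    simp only [mul_comp, C_comp, hcomp, pow_succ]
    simp only [mul_left_comm _ (C _), mul_comm (X + 1 : ℝ[X])]
  rw [h1, coeff_sub, finsetSum_coeff, finsetSum_coeff]
  simp only [coeff_C_mul, coeff_X_add_one_pow]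

lemma coeff_padeRem_comp_eq_zero {r : ℕ} (hr : 2 ≤ r) {m d : ℕ} (hd : d ≤ 2 * m) :
    ((padeRem r m).comp (X + 1)).coeff d = 0 := by
  rw [coeff_padeRem_comp, sub_eq_zero]
  have h := sum_padeCoeff_eval hr m (p := descPochhammer ℝ d)
    (by rwa [descPochhammer_natDegree])
  simp only [descPochhammer_eval_eq_descFactorial, Nat.descFactorial_eq_factorial_mul_choose] at h
  simp only [Nat.cast_mul d.factorial] at h
  have hd0 : (d.factorial : ℝ) ≠ 0 := by positivity
  apply mul_left_cancel₀ hd0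
  rw [mul_sum, mul_sum]
  convert h using 2 <;> ring

lemma X_sub_one_pow_dvd_padeRem {r : ℕ} (hr : 2 ≤ r) (m : ℕ) :
    (X - C 1 : ℝ[X]) ^ (2 * m + 1) ∣ padeRem r m := by
  rw [X_sub_C_pow_dvd_iff, X_pow_dvd_iff]
  intro d hd
  rw [C_1]
  exact coeff_padeRem_comp_eq_zero hr (by omega)

lemma abs_eval_padeRem_le {r : ℕ} (hr : 2 ≤ r) (m : ℕ) {w : ℝ} (hw : |w - 1| ≤ 1) :
    |(padeRem r m).eval w| ≤ |w - 1| ^ (2 * m + 1) *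
      (4 * r * (r + 1) * 2 ^ (r + 2)) ^ (m + 1) := by
  have hcoef : ∀ i ≤ m, |padeCoeff r m i| ≤ (4 * r * (r + 1)) ^ m := fun i => abs_padeCoeff_le hr
  have hK1 : (1 : ℝ) ≤ 4 * r * (r + 1) := by
    have : (2 : ℝ) ≤ r := by exact_mod_cast hr
    nlinarith
  generalize (4 * r * (r + 1) : ℝ) = K at hcoef hK1 ⊢
  set P := (padeRem r m).comp (X + 1) with hP
  have hcoeff : ∀ d, |P.coeff d| ≤
      ∑ i ∈ range (m + 1), K ^ m * (((r * i).choose d : ℝ) + ((r * i + 1).choose d : ℝ)) := by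
    intro d
    rw [hP, coeff_padeRem_comp, ← sum_sub_distrib]
    refine (abs_sum_le_sum_abs _ _).trans (sum_le_sum fun i hi => ?_)
    have hi' : i ≤ m := by rw [mem_range] at hi; omega
    refine (abs_sub _ _).trans ?_
    rw [abs_mul, abs_mul, Nat.abs_cast, Nat.abs_cast, mul_add]
    gcongr
    · exact hcoef _ hi'
    · exact hcoef _ (Nat.sub_le m i)
  have hdeg : P.natDegree < r * m + 2 := by
    refine Nat.lt_succ_of_le (natDegree_le_iff_coeff_eq_zero.2 fun d hd => ?_)
    rw [hP, coeff_padeRem_comp, sum_eq_zero, sum_eq_zero, sub_zero]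
    · intro i hi
      have : r * i ≤ r * m := Nat.mul_le_mul_left _ (by rw [mem_range] at hi; omega)
      rw [Nat.choose_eq_zero_of_lt (by omega), Nat.cast_zero, mul_zero]
    · intro i hi
      have : r * i ≤ r * m := Nat.mul_le_mul_left _ (by rw [mem_range] at hi; omega)
      rw [Nat.choose_eq_zero_of_lt (by omega), Nat.cast_zero, mul_zero]
  have heval : (padeRem r m).eval w = ∑ d ∈ range (r * m + 2), P.coeff d * (w - 1) ^ d := by
    rw [← eval_eq_sum_range' hdeg, hP, eval_comp]
    simp
  have hchoose : ∀ N, N < r * m + 2 → ∑ d ∈ range (r * m + 2), (N.choose d : ℝ) = 2 ^ N := by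
    intro N hN
    have h2 : (2 : ℝ) ^ N = ((2 ^ N : ℕ) : ℝ) := by push_cast; rfl
    rw [h2, ← Nat.sum_range_choose, Nat.cast_sum]
    refine (sum_subset (range_subset_range.2 (by omega)) fun d _ hd => ?_).symm
    rw [mem_range] at hd
    rw [Nat.choose_eq_zero_of_lt (by omega), Nat.cast_zero]
  rw [heval]
  calc |∑ d ∈ range (r * m + 2), P.coeff d * (w - 1) ^ d|
      ≤ ∑ d ∈ range (r * m + 2), |w - 1| ^ (2 * m + 1) * |P.coeff d| := by
        refine (abs_sum_le_sum_abs _ _).trans (sum_le_sum fun d _ => ?_)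
        rcases le_or_gt d (2 * m) with hd | hd
        · rw [hP, coeff_padeRem_comp_eq_zero hr hd]
          simp
        · rw [abs_mul, mul_comm, abs_pow]
          gcongr ?_ * _
          exact pow_le_pow_of_le_one (abs_nonneg _) hw hd
    _ ≤ ∑ d ∈ range (r * m + 2), |w - 1| ^ (2 * m + 1) *
          ∑ i ∈ range (m + 1), K ^ m * (((r * i).choose d : ℝ) + ((r * i + 1).choose d : ℝ)) := by
        gcongr with d
        exact hcoeff d
    _ = |w - 1| ^ (2 * m + 1) * ∑ i ∈ range (m + 1), K ^ m * (2 ^ (r * i) + 2 ^ (r * i + 1)) := by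
        rw [← mul_sum, sum_comm]
        congr 1
        refine sum_congr rfl fun i hi => ?_
        have : r * i ≤ r * m := Nat.mul_le_mul_left _ (by rw [mem_range] at hi; omega)
        rw [← mul_sum, sum_add_distrib, hchoose _ (by omega), hchoose _ (by omega)]
    _ ≤ |w - 1| ^ (2 * m + 1) * ∑ i ∈ range (m + 1), K ^ m * (2 ^ (r * m) + 2 ^ (r * m + 1)) := by
        gcongr with i hi i hi
        · norm_num
        · rw [mem_range] at hi; omega
        · norm_num
        · rw [mem_range] at hi; omega
    _ = |w - 1| ^ (2 * m + 1) * ((m + 1 : ℕ) * (K ^ m * (3 * 2 ^ (r * m)))) := by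
        rw [sum_const, card_range, nsmul_eq_mul, pow_succ]
        ring
    _ ≤ |w - 1| ^ (2 * m + 1) * (2 ^ (2 * m) * (K ^ (m + 1) * (2 ^ (r + 2) * 2 ^ (r * m)))) := by
        have h2 : ((m + 1 : ℕ) : ℝ) ≤ 2 ^ (2 * m) := by
          have h3 : m + 1 ≤ 2 ^ m := Nat.lt_two_pow_self
          have h4 : 2 ^ m ≤ 2 ^ (2 * m) := Nat.pow_le_pow_right (by norm_num) (by omega)
          exact_mod_cast h3.trans h4
        have h3 : (3 : ℝ) ≤ 2 ^ (r + 2) := by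
          calc (3 : ℝ) ≤ 2 ^ 2 := by norm_num
            _ ≤ _ := pow_le_pow_right₀ (by norm_num) (by omega)
        gcongr
        omega
    _ = |w - 1| ^ (2 * m + 1) * (K * 2 ^ (r + 2)) ^ (m + 1) := by
        rw [mul_pow, ← pow_mul]
        ring

lemma abs_eval_padeDen_le {r : ℕ} (hr : 2 ≤ r) (m : ℕ) {x : ℝ} (hx : |x| ≤ 2) :
    |(padeDen r m).eval x| ≤ (4 * r * (r + 1) * 2 ^ (r + 2)) ^ (m + 1) := by
  have hcoef : ∀ i ≤ m, |padeCoeff r m i| ≤ (4 * r * (r + 1)) ^ m := fun i => abs_padeCoeff_le hr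
  have hK1 : (1 : ℝ) ≤ 4 * r * (r + 1) := by
    have : (2 : ℝ) ≤ r := by exact_mod_cast hr
    nlinarith
  generalize (4 * r * (r + 1) : ℝ) = K at hcoef hK1 ⊢
  rw [padeDen, eval_finsetSum]
  calc |∑ i ∈ range (m + 1), (C (padeCoeff r m (m - i)) * X ^ i).eval x|
      ≤ ∑ i ∈ range (m + 1), K ^ m * 2 ^ m := by
        refine (abs_sum_le_sum_abs _ _).trans (sum_le_sum fun i hi => ?_)
        rw [eval_C_mul, eval_pow, eval_X, abs_mul, abs_pow]
        gcongr
        · exact hcoef _ (Nat.sub_le m i)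
        · calc |x| ^ i ≤ 2 ^ i := by gcongr
            _ ≤ 2 ^ m := pow_le_pow_right₀ (by norm_num) (by rw [mem_range] at hi; omega)
    _ = (m + 1 : ℕ) * (K ^ m * 2 ^ m) := by rw [sum_const, card_range, nsmul_eq_mul]
    _ ≤ 2 ^ (m + 1) * (K ^ (m + 1) * 2 ^ (m + 1)) := by
        have h2 : ((m + 1 : ℕ) : ℝ) ≤ 2 ^ (m + 1) := by exact_mod_cast Nat.lt_two_pow_self.le
        gcongr <;> first | omega | norm_num
    _ = (K * 2 ^ 2) ^ (m + 1) := by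
        rw [← mul_pow, ← mul_pow]
        ring
    _ ≤ _ := by
        gcongr <;> first | omega | norm_num

lemma exists_int_eq_pow_mul_eval_padeNum {r : ℕ} (hr : 2 ≤ r) (m : ℕ) (p : ℤ) {q : ℕ}
    (hq : q ≠ 0) : ∃ z : ℤ, (q : ℝ) ^ m * (padeNum r m).eval ((p : ℝ) / q) = z := by
  have h : ∀ i, ∃ z : ℤ, i ≤ m → padeCoeff r m i = z := by
    intro i
    by_cases hi : i ≤ m
    · obtain ⟨z, hz, -⟩ := exists_padeCoeff_eq_neg hr hi
      exact ⟨-z, fun _ => by rw [hz]; push_cast; rfl⟩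
    · exact ⟨0, fun h => absurd h hi⟩
  choose z hz using h
  refine ⟨∑ i ∈ range (m + 1), z i * p ^ i * q ^ (m - i), ?_⟩
  rw [padeNum, eval_finsetSum, mul_sum]
  push_cast
  refine sum_congr rfl fun i hi => ?_
  have hi' : i ≤ m := by rw [mem_range] at hi; omega
  have hq' : (q : ℝ) ≠ 0 := by exact_mod_cast hq
  rw [eval_C_mul, eval_pow, eval_X, hz i hi', ← pow_sub_mul_pow (q : ℝ) hi', div_pow]
  field_simp

lemma exists_int_eq_pow_mul_eval_padeDen {r : ℕ} (hr : 2 ≤ r) (m : ℕ) (p : ℤ) {q : ℕ}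
    (hq : q ≠ 0) : ∃ z : ℤ, (q : ℝ) ^ m * (padeDen r m).eval ((p : ℝ) / q) = z := by
  have h : ∀ i, ∃ z : ℤ, padeCoeff r m (m - i) = z := by
    intro i
    obtain ⟨z, hz, -⟩ := exists_padeCoeff_eq_neg hr (Nat.sub_le m i)
    exact ⟨-z, by rw [hz]; push_cast; rfl⟩
  choose z hz using h
  refine ⟨∑ i ∈ range (m + 1), z i * p ^ i * q ^ (m - i), ?_⟩
  rw [padeDen, eval_finsetSum, mul_sum]
  push_cast
  refine sum_congr rfl fun i hi => ?_
  have hi' : i ≤ m := by rw [mem_range] at hi; omega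
  have hq' : (q : ℝ) ≠ 0 := by exact_mod_cast hq
  rw [eval_C_mul, eval_pow, eval_X, hz i, ← pow_sub_mul_pow (q : ℝ) hi', div_pow]
  field_simp

/-- Consecutive diagonal Padé approximants never agree away from `1`. -/
lemma eval_padeNum_mul_padeDen_ne {r : ℕ} (hr : 2 ≤ r) (m : ℕ) {x : ℝ} (hx : x ≠ 1) :
    (padeNum r m).eval x * (padeDen r (m + 1)).eval x ≠
      (padeNum r (m + 1)).eval x * (padeDen r m).eval x := by
  set D := padeNum r m * padeDen r (m + 1) - padeNum r (m + 1) * padeDen r m with hD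
  have hD0 : D.eval 0 ≠ 0 := by
    have hN : ∀ n, (padeNum r n).eval 0 = padeCoeff r n 0 := fun n => by
      rw [← coeff_zero_eq_eval_zero, padeNum, finsetSum_coeff, sum_eq_single 0
        (fun b _ hb => by simp [coeff_X_pow, hb.symm]) (by simp)]
      simp
    have hDn : ∀ n, (padeDen r n).eval 0 = padeCoeff r n n := fun n => by
      rw [← coeff_zero_eq_eval_zero, padeDen, finsetSum_coeff, sum_eq_single 0
        (fun b _ hb => by simp [coeff_X_pow, hb.symm]) (by simp)]
      simp
    have h1 : ∀ n, padeCoeff r n 0 = -(r ^ n * prodMulSubOne r n / n.factorial) := fun n => by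
      have := (prodMulAddOne_pos r n).ne'
      rw [padeCoeff, Nat.sub_zero]
      simp only [prodMulSubOne, range_zero, prod_empty, Nat.factorial_zero, Nat.cast_one]
      field_simp
    have h2 : ∀ n, padeCoeff r n n = -(r ^ n * prodMulAddOne r n / n.factorial) := fun n => by
      have := (prodMulSubOne_pos hr n).ne'
      rw [padeCoeff, Nat.sub_self]
      simp only [prodMulAddOne, zero_add, range_one, prod_singleton, Nat.factorial_zero,
        Nat.cast_one, Nat.cast_zero, mul_zero]
      field_simp
    have h3 : prodMulSubOne r (m + 1) = prodMulSubOne r m * (r * (m + 1) - 1) := by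
      rw [prodMulSubOne, prod_range_succ, prodMulSubOne]
    have h4 : prodMulAddOne r (m + 1) = prodMulAddOne r m * (r * (m + 1) + 1) := by
      rw [prodMulAddOne, prod_range_succ, prodMulAddOne]
      push_cast
      ring
    have hval : D.eval 0 = 2 * (r ^ m * r ^ (m + 1) * prodMulSubOne r m * prodMulAddOne r m /
        (m.factorial * (m + 1).factorial)) := by
      rw [hD, eval_sub, eval_mul, eval_mul, hN, hN, hDn, hDn, h1, h1, h2, h2, h3, h4]
      field_simp
      ring
    rw [hval]
    have := prodMulSubOne_pos hr m
    have := prodMulAddOne_pos r m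
    positivity
  have hdvd : (X - C 1 : ℝ[X]) ^ (2 * m + 1) ∣ D.comp (X ^ r) := by
    have : D.comp (X ^ r) = padeRem r m * (padeDen r (m + 1)).comp (X ^ r) -
        padeRem r (m + 1) * (padeDen r m).comp (X ^ r) := by
      simp only [hD, padeRem, sub_comp, mul_comp]
      ring
    rw [this]
    exact dvd_sub ((X_sub_one_pow_dvd_padeRem hr m).mul_right _)
      (((pow_dvd_pow _ (by omega)).trans (X_sub_one_pow_dvd_padeRem hr (m + 1))).mul_right _)
  have hDne : D ≠ 0 := by
    rintro h
    simp [h] at hD0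
  obtain ⟨E, hE, hE1⟩ := exists_eq_pow_rootMultiplicity_mul_and_not_dvd D hDne 1
  set s := D.rootMultiplicity 1 with hs
  have hE1' : E.eval 1 ≠ 0 := fun h => hE1 (dvd_iff_isRoot.2 h)
  have hsm : 2 * m + 1 ≤ s := by
    by_contra! hlt
    obtain ⟨G, hG⟩ : (X - C 1 : ℝ[X]) ∣ X ^ r - 1 := by
      rw [dvd_iff_isRoot]
      simp
    have hG1 : G.eval 1 ≠ 0 := by
      have h := congrArg (fun f => (derivative f).eval 1) hG
      simp at h
      rw [← h, derivative_X_pow]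
      simp
      omega
    have hcomp : D.comp (X ^ r) = (X - C 1) ^ s * (G ^ s * E.comp (X ^ r)) := by
      conv_lhs => rw [hE]
      rw [mul_comp, pow_comp, sub_comp, X_comp, C_comp, C_1, hG, mul_pow, C_1]
      ring
    rw [hcomp] at hdvd
    have h1 := (pow_dvd_pow (X - C 1 : ℝ[X]) (show s + 1 ≤ 2 * m + 1 by omega)).trans hdvd
    rw [pow_succ, mul_dvd_mul_iff_left (pow_ne_zero _ (X_sub_C_ne_zero 1)), dvd_iff_isRoot] at h1
    simp only [IsRoot, eval_mul, eval_pow, eval_comp, eval_X, one_pow] at h1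
    exact (mul_ne_zero (pow_ne_zero _ hG1) hE1') h1
  have hdeg : D.natDegree ≤ 2 * m + 1 := by
    refine (natDegree_sub_le _ _).trans (max_le ?_ ?_)
    · refine natDegree_mul_le.trans ?_
      have := natDegree_padeNum_le r m
      have := natDegree_padeDen_le r (m + 1)
      omega
    · refine natDegree_mul_le.trans ?_
      have := natDegree_padeNum_le r (m + 1)
      have := natDegree_padeDen_le r m
      omega
  have hEne : E ≠ 0 := by
    rintro rfl
    simp at hE1'
  have hEdeg : E.natDegree = 0 := by
    have := congrArg natDegree hE
    rw [natDegree_mul (pow_ne_zero _ (X_sub_C_ne_zero 1)) hEne, natDegree_pow,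
      natDegree_X_sub_C] at this
    omega
  rw [← sub_ne_zero, ← eval_mul, ← eval_mul, ← eval_sub, ← hD, hE, eval_mul, eval_pow, eval_sub,
    eval_X, eval_C]
  refine mul_ne_zero (pow_ne_zero _ (sub_ne_zero.2 hx)) ?_
  rw [eq_C_of_natDegree_eq_zero hEdeg, eval_C] at hE1' ⊢
  exact hE1'

lemma abs_eval_padeNum_sub_le {r : ℕ} (hr : 2 ≤ r) (m : ℕ) {x z e : ℝ} (hx : |x - 1| ≤ 1 / 2)
    (hz : 0 < z) (he : |x - z ^ r| ≤ e) :
    |(padeNum r m).eval x - z * (padeDen r m).eval x| ≤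
      (|x - 1| ^ (2 * m + 1) + 2 * e) * (4 * r * (r + 1) * 2 ^ (r + 2)) ^ (m + 1) := by
  have hx' := abs_le.1 hx
  obtain ⟨w, hw0, rfl⟩ : ∃ w : ℝ, 0 < w ∧ w ^ r = x :=
    ⟨x ^ (1 / (r : ℝ)), Real.rpow_pos_of_pos (by linarith) _, by
      rw [← Real.rpow_natCast, ← Real.rpow_mul (by linarith), one_div_mul_cancel (by positivity),
        Real.rpow_one]⟩
  have hw1 : |w - 1| ≤ |w ^ r - 1| := by
    have h1 := geom_sum₂_mul w 1 r
    rw [one_pow] at h1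
    rw [← h1, abs_mul]
    refine le_mul_of_one_le_left (abs_nonneg _) ((le_abs_self _).trans' ?_)
    have h2 := single_le_sum (f := fun i => w ^ i * (1 : ℝ) ^ (r - 1 - i))
      (fun i _ => by positivity) (mem_range.2 (by omega : 0 < r))
    simpa using h2
  have hwz : |w - z| ≤ 2 * e := by
    have h1 := geom_sum₂_mul w z r
    have h2 := single_le_sum (f := fun i => w ^ i * z ^ (r - 1 - i))
      (fun i _ => by positivity) (mem_range.2 (by omega : r - 1 < r))
    simp only [Nat.sub_self, pow_zero, mul_one] at h2
    have h3 : 1 / 2 ≤ w ^ (r - 1) := by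
      rcases le_or_gt w 1 with h | h
      · have := pow_le_pow_of_le_one hw0.le h (Nat.sub_le r 1)
        linarith
      · have := one_le_pow₀ h.le (n := r - 1)
        linarith
    have h4 : 1 / 2 * |w - z| ≤ |w ^ r - z ^ r| := by
      rw [← h1, abs_mul]
      exact mul_le_mul_of_nonneg_right ((h3.trans h2).trans (le_abs_self _)) (abs_nonneg _)
    linarith
  have hrem : (padeNum r m).eval (w ^ r) - z * (padeDen r m).eval (w ^ r) =
      (padeRem r m).eval w + (w - z) * (padeDen r m).eval (w ^ r) := by
    simp only [padeRem, eval_sub, eval_mul, eval_comp, eval_pow, eval_X]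
    ring
  rw [hrem, add_mul]
  refine (abs_add_le _ _).trans (add_le_add ?_ ?_)
  · refine (abs_eval_padeRem_le hr m (hw1.trans (hx.trans (by norm_num)))).trans ?_
    gcongr
  · rw [abs_mul]
    gcongr
    · exact (abs_nonneg _).trans hwz
    · exact abs_eval_padeDen_le hr m (abs_le.2 ⟨by linarith, by linarith⟩)

set_option maxHeartbeats 2000000 in
/-- Two solutions of `v * a + u = a'` in the same class modulo tenth powers cannot be far apart,
once the smaller one is large. -/
lemma exists_forall_ne_pow_ten {v : ℕ} (hv : 1 ≤ v) {u : ℤ} (hu : u ≠ 0) :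
    ∃ N₁ : ℕ, ∀ a : ℕ, N₁ ≤ a → ∃ N₂ : ℕ, ∀ b : ℕ, N₂ ≤ b → ∀ s t : ℕ,
      b * a ^ 9 = s ^ 10 → ((v : ℤ) * b + u) * ((v : ℤ) * a + u) ^ 9 = t ^ 10 → False := by
  obtain ⟨C, hC1, hCR⟩ : ∃ C : ℕ, 1 ≤ C ∧
      4 * ((10 : ℕ) : ℝ) * ((10 : ℕ) + 1) * 2 ^ (10 + 2) = C :=
    ⟨4 * 10 * 11 * 2 ^ 12, by norm_num, by norm_num⟩
  set U := u.natAbs with hU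
  have hU1 : 1 ≤ U := Int.natAbs_pos.2 hu
  have huU : |(u : ℝ)| = U := by rw [hU, Nat.cast_natAbs, Int.cast_abs]
  have hU1R : (1 : ℝ) ≤ U := by exact_mod_cast hU1
  have hvR : (1 : ℝ) ≤ v := by exact_mod_cast hv
  have hC1R : (1 : ℝ) ≤ C := by exact_mod_cast hC1
  refine ⟨(C * U ^ 2) ^ 2 + 2 * U + C + 2, fun a ha =>
    ⟨(300 * U * C ^ 5 * (v * a) ^ 4 * a ^ 5) ^ 2 * (v + U) * (v * a + U) ^ 9 + 1 + 2 * U,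
      fun b hb s t hs ht => ?_⟩⟩
  set q := v * a with hq
  have haq : a ≤ q := Nat.le_mul_of_pos_left _ hv
  have hq2 : 2 * U + C + 2 + (C * U ^ 2) ^ 2 ≤ q := by omega
  have hqR : 2 * (U : ℝ) + C + 2 + (C * U ^ 2) ^ 2 ≤ q := by exact_mod_cast hq2
  have hg : ((C : ℝ) * U ^ 2) ^ 2 ≤ q := by linarith
  have hgp : (0 : ℝ) < (C : ℝ) * U ^ 2 := by positivity
  have hgp2 : (0 : ℝ) < ((C : ℝ) * U ^ 2) ^ 2 := by positivity
  have hq0 : (0 : ℝ) < q := by linarith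
  have ha0 : (0 : ℝ) < a := by exact_mod_cast (by omega : 0 < a)
  have hb0 : 0 < b := by omega
  have hb0R : (0 : ℝ) < b := by exact_mod_cast hb0
  have hbU : 2 * (U : ℝ) ≤ v * b := by
    have : 2 * U ≤ v * b := le_trans (by omega) (Nat.le_mul_of_pos_left b hv)
    exact_mod_cast this
  obtain ⟨hu1, hu2⟩ := abs_le.1 huU.le
  have ha' : (0 : ℝ) < v * a + u := by
    have : (q : ℝ) = v * a := by rw [hq]; push_cast; ring
    linarith
  have hb' : (0 : ℝ) < v * b + u := by linarith
  have htR : ((v : ℝ) * b + u) * ((v : ℝ) * a + u) ^ 9 = t ^ 10 := by exact_mod_cast ht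
  have hsR : (b : ℝ) * a ^ 9 = s ^ 10 := by exact_mod_cast hs
  have ht0 : (0 : ℝ) < t := by
    rcases Nat.eq_zero_or_pos t with rfl | h
    · have : (0 : ℝ) < ((v : ℝ) * b + u) * ((v : ℝ) * a + u) ^ 9 := by positivity
      rw [htR] at this
      simp at this
    · exact_mod_cast h
  have hs0 : (0 : ℝ) < s := by
    rcases Nat.eq_zero_or_pos s with rfl | h
    · have : (0 : ℝ) < (b : ℝ) * a ^ 9 := by positivity
      rw [hsR] at this
      simp at this
    · exact_mod_cast h
  set x : ℝ := ((v * a + u : ℤ) : ℝ) / (q : ℝ) with hx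
  have hqva : (q : ℝ) = v * a := by rw [hq]; push_cast; ring
  have hx1 : x - 1 = u / q := by
    rw [hx, div_sub_one hq0.ne', hqva]
    push_cast
    ring
  have hxabs : |x - 1| = U / q := by rw [hx1, abs_div, huU, abs_of_pos hq0]
  have hxhalf : |x - 1| ≤ 1 / 2 := by
    rw [hxabs, div_le_div_iff₀ hq0 (by norm_num)]
    linarith
  have hxne : x ≠ 1 := by
    rw [← sub_ne_zero, hx1]
    exact div_ne_zero (by exact_mod_cast hu) hq0.ne'
  set z : ℝ := (v * a + u) * s / (a * t) with hz
  have hz0 : 0 < z := by positivity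
  have hzx : z ^ 10 * (1 + u / (v * b)) = x := by
    have h1 : z ^ 10 = (v * a + u) ^ 10 * (b * a ^ 9) /
        (a ^ 10 * ((v * b + u) * (v * a + u) ^ 9)) := by
      rw [hz, htR, hsR, div_pow, mul_pow, mul_pow]
    rw [h1, hx, hqva]
    push_cast
    have : (v : ℝ) ≠ 0 := by positivity
    field_simp
  have hd2 : |(u : ℝ) / (v * b)| ≤ 1 / 2 := by
    rw [abs_div, huU, abs_of_pos (by positivity), div_le_div_iff₀ (by positivity) (by norm_num)]
    linarith
  have hd3 : |(u : ℝ) / (v * b)| ≤ U / b := by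
    rw [abs_div, huU, abs_of_pos (by positivity)]
    gcongr
    nlinarith
  have he : |x - z ^ 10| ≤ 3 * U / b := by
    have hz3 : z ^ 10 ≤ 3 := by
      have h1 := (abs_le.1 hd2).1
      have h2 := (abs_le.1 hxhalf).2
      have h3 : 0 < z ^ 10 := by positivity
      nlinarith
    rw [← hzx, mul_add, mul_one, add_sub_cancel_left, abs_mul, abs_of_pos (by positivity),
      mul_div_assoc]
    gcongr
  have happrox : ∀ m, |(padeNum 10 m).eval x - z * (padeDen 10 m).eval x| ≤
      ((U / q : ℝ) ^ (2 * m + 1) + 6 * U / b) * (C : ℝ) ^ (m + 1) := by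
    intro m
    have := abs_eval_padeNum_sub_le (r := 10) (by norm_num) m hxhalf hz0 he
    rw [hxabs] at this
    rw [hCR, ← mul_div_assoc, ← mul_assoc] at this
    norm_num at this
    exact this
  set d := a * t with hd
  have hd1 : 1 ≤ d := Nat.mul_pos (by omega) (by exact_mod_cast ht0)
  have hdR : (1 : ℝ) ≤ d := by exact_mod_cast hd1
  have hint : ∀ m, ∃ k : ℤ, (q : ℝ) ^ m * d *
      ((padeNum 10 m).eval x - z * (padeDen 10 m).eval x) = k := by
    intro m
    have hqn : q ≠ 0 := by omega
    obtain ⟨k₁, hk₁⟩ := exists_int_eq_pow_mul_eval_padeNum (r := 10) (by norm_num) m (v * a + u) hqn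
    obtain ⟨k₂, hk₂⟩ := exists_int_eq_pow_mul_eval_padeDen (r := 10) (by norm_num) m (v * a + u) hqn
    refine ⟨d * k₁ - (v * a + u) * s * k₂, ?_⟩
    rw [Int.cast_sub, Int.cast_mul, Int.cast_mul, ← hk₁, ← hk₂, ← hx]
    have hdz : (d : ℝ) * z = (v * a + u) * s := by
      rw [hz, hd]
      push_cast
      field_simp
    push_cast
    linear_combination -(q : ℝ) ^ m * (padeDen 10 m).eval x * hdz
  set Y : ℕ := 4 * d ^ 2 * C ^ 2 + 1 with hY
  have hbbig : 300 * (U : ℝ) * C ^ 5 * q ^ 4 * d ^ 5 < b := by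
    have ht10 : (t : ℝ) ^ 10 ≤ ((v + U) * b) * (q + U) ^ 9 := by
      rw [← htR, hqva]
      have hb1 : (1 : ℝ) ≤ b := by exact_mod_cast hb0
      gcongr
      nlinarith
    have hbR : (300 * (U : ℝ) * C ^ 5 * q ^ 4 * a ^ 5) ^ 2 * (v + U) * (q + U) ^ 9 < b := by
      have : (300 * U * C ^ 5 * q ^ 4 * a ^ 5) ^ 2 * (v + U) * (q + U) ^ 9 < b := by omega
      exact_mod_cast this
    refine lt_of_pow_lt_pow_left₀ 2 hb0R.le ?_
    calc (300 * (U : ℝ) * C ^ 5 * q ^ 4 * d ^ 5) ^ 2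
        = (300 * (U : ℝ) * C ^ 5 * q ^ 4 * a ^ 5) ^ 2 * t ^ 10 := by
          rw [hd]; push_cast; ring
      _ ≤ (300 * (U : ℝ) * C ^ 5 * q ^ 4 * a ^ 5) ^ 2 * (((v + U) * b) * (q + U) ^ 9) := by
          gcongr
      _ = ((300 * (U : ℝ) * C ^ 5 * q ^ 4 * a ^ 5) ^ 2 * (v + U) * (q + U) ^ 9) * b := by ring
      _ < b * b := by gcongr
      _ = _ := by ring
  have hzero : ∀ m, Y ≤ q ^ m → q ^ m ≤ q ^ 2 * Y →
      (padeNum 10 m).eval x = z * (padeDen 10 m).eval x := by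
    intro m hm1 hm2
    have hm1R : 4 * (d : ℝ) ^ 2 * C ^ 2 < q ^ m := by
      have : 4 * d ^ 2 * C ^ 2 < q ^ m := by omega
      exact_mod_cast this
    have hm2R : (q : ℝ) ^ m ≤ q ^ 2 * (5 * d ^ 2 * C ^ 2) := by
      have h1 : 1 ≤ d ^ 2 * C ^ 2 := Nat.mul_pos (pow_pos hd1 2) (pow_pos hC1 2)
      have : q ^ m ≤ q ^ 2 * (5 * d ^ 2 * C ^ 2) :=
        hm2.trans (Nat.mul_le_mul_left _ (by rw [hY]; nlinarith))
      exact_mod_cast this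
    obtain ⟨k, hk⟩ := hint m
    have hlt : |(k : ℝ)| < 1 := by
      have h1 : (q : ℝ) ^ m * d * ((U / q : ℝ) ^ (2 * m + 1) * (C : ℝ) ^ (m + 1)) < 1 / 2 := by
        have h2 : (q : ℝ) ^ m * d * ((U / q : ℝ) ^ (2 * m + 1) * (C : ℝ) ^ (m + 1)) =
            d * C * (C * U ^ 2 / q) ^ m * (U / q) := by
          rw [pow_succ, pow_mul, pow_succ (C : ℝ)]
          have : (q : ℝ) ^ m * ((U / q : ℝ) ^ 2) ^ m * (C : ℝ) ^ m = (C * U ^ 2 / q) ^ m := by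
            rw [← mul_pow, ← mul_pow]
            congr 1
            field_simp
          rw [← this]
          ring
        have h3 : (U : ℝ) / q ≤ 1 := by
          rw [div_le_one hq0]
          linarith
        have h4 : d * C * (C * U ^ 2 / q : ℝ) ^ m < 1 / 2 := by
          refine lt_of_pow_lt_pow_left₀ 2 (by norm_num) ?_
          have h5 : ((C * U ^ 2 / q : ℝ) ^ m) ^ 2 ≤ (1 / q : ℝ) ^ m := by
            rw [← pow_mul, mul_comm m 2, pow_mul]
            gcongr
            rw [div_pow, div_le_div_iff₀ (by positivity) hq0]
            nlinarith
          calc (d * C * (C * U ^ 2 / q : ℝ) ^ m) ^ 2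
              = (d * C : ℝ) ^ 2 * ((C * U ^ 2 / q : ℝ) ^ m) ^ 2 := by ring
            _ ≤ (d * C : ℝ) ^ 2 * (1 / q) ^ m := by gcongr
            _ = (d * C : ℝ) ^ 2 / (q : ℝ) ^ m := by rw [one_div, inv_pow]; rfl
            _ < (1 / 2) ^ 2 := by
              rw [div_lt_iff₀ (by positivity)]
              nlinarith
        rw [h2]
        exact (mul_le_of_le_one_right (by positivity) h3).trans_lt h4
      have h2 : (q : ℝ) ^ m * d * (6 * U / b * (C : ℝ) ^ (m + 1)) < 1 / 2 := by
        have hCq : (C : ℝ) ^ m ≤ q ^ m := by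
          gcongr
          omega
        calc (q : ℝ) ^ m * d * (6 * U / b * (C : ℝ) ^ (m + 1))
            = 6 * U * C * d * (q ^ m * C ^ m) / b := by ring
          _ ≤ 6 * U * C * d * ((q ^ 2 * (5 * d ^ 2 * C ^ 2)) *
              (q ^ 2 * (5 * d ^ 2 * C ^ 2))) / b := by
              gcongr
              exact hCq.trans hm2R
          _ = (300 * (U : ℝ) * C ^ 5 * q ^ 4 * d ^ 5) / 2 / b := by ring
          _ < 1 / 2 := by
              rw [div_lt_iff₀ hb0R]
              linarith
      rw [← hk, abs_mul, abs_of_nonneg (by positivity : (0 : ℝ) ≤ (q : ℝ) ^ m * d)]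
      calc _ ≤ (q : ℝ) ^ m * d * (((U / q : ℝ) ^ (2 * m + 1) + 6 * U / b) * (C : ℝ) ^ (m + 1)) := by
            exact mul_le_mul_of_nonneg_left (happrox m) (by positivity)
        _ < 1 := by
            rw [add_mul, mul_add]
            linarith
    have hk0 : k = 0 := by
      rw [← Int.abs_lt_one_iff]
      exact_mod_cast hlt
    rw [hk0, Int.cast_zero] at hk
    have hne : (q : ℝ) ^ m * d ≠ 0 := by positivity
    exact sub_eq_zero.1 ((mul_eq_zero.1 hk).resolve_left hne)
  have hq1 : 1 < q := by omega
  obtain ⟨m, hm1, hm2⟩ : ∃ m, Y ≤ q ^ m ∧ q ^ m ≤ q * Y := by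
    refine ⟨Nat.log q Y + 1, (Nat.lt_pow_succ_log_self hq1 Y).le, ?_⟩
    rw [pow_succ, mul_comm]
    exact Nat.mul_le_mul_left _ (Nat.pow_log_le_self q (by omega))
  have e1 := hzero m hm1 (hm2.trans (by gcongr; nlinarith))
  have e2 := hzero (m + 1) (hm1.trans (Nat.pow_le_pow_right (by omega) (by omega)))
    (by rw [pow_succ]; nlinarith)
  apply eval_padeNum_mul_padeDen_ne (r := 10) (by norm_num) m hxne
  rw [e1, e2]
  ring

lemma exists_eq_pow_of_dvd_factorization {r N : ℕ} (hN : N ≠ 0)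
    (h : ∀ p, r ∣ N.factorization p) : ∃ s, N = s ^ r := by
  refine ⟨N.factorization.prod fun p e => p ^ (e / r), ?_⟩
  conv_lhs => rw [← Nat.prod_factorization_pow_eq_self hN]
  rw [Finsupp.prod, Finsupp.prod, ← Finset.prod_pow]
  refine prod_congr rfl fun p _ => ?_
  rw [← pow_mul, Nat.div_mul_cancel (h p)]

lemma exists_mul_pow_nine_eq_pow_ten {x y B : ℕ} (hx : x ≠ 0) (hy : y ≠ 0)
    (hxB : ∀ p, p.Prime → p ∣ x → p ≤ B) (hyB : ∀ p, p.Prime → p ∣ y → p ≤ B)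
    (h : ∀ p ≤ B, x.factorization p % 10 = y.factorization p % 10) : ∃ s, x * y ^ 9 = s ^ 10 := by
  refine exists_eq_pow_of_dvd_factorization (mul_ne_zero hx (pow_ne_zero _ hy)) fun p => ?_
  rw [Nat.factorization_mul hx (pow_ne_zero _ hy), Nat.factorization_pow]
  simp only [Finsupp.add_apply, Finsupp.smul_apply, smul_eq_mul]
  by_cases hp : p.Prime
  · rcases le_or_gt p B with hpB | hpB
    · have := h p hpB
      omega
    · rw [Nat.factorization_eq_zero_of_not_dvd fun hd => (hxB p hp hd).not_gt hpB,
        Nat.factorization_eq_zero_of_not_dvd fun hd => (hyB p hp hd).not_gt hpB]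
      simp
  · simp [Nat.factorization_eq_zero_of_not_prime _ hp]

/-- Only finitely many values `n * (v * n + u)` are composed of primes at most `B`. -/
lemma finite_setOf_smooth_mul {v : ℕ} (hv : 1 ≤ v) {u : ℤ} (hu : u ≠ 0) (B : ℕ) :
    {n : ℕ | ∀ p : ℕ, p.Prime → (p : ℤ) ∣ n * ((v : ℤ) * n + u) → p ≤ B}.Finite := by
  set S := {n : ℕ | ∀ p : ℕ, p.Prime → (p : ℤ) ∣ n * ((v : ℤ) * n + u) → p ≤ B} with hS
  by_contra hinf
  let f : ℕ → Fin (B + 1) → Fin 10 × Fin 10 := fun n p =>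
    (Fin.ofNat 10 (n.factorization p), Fin.ofNat 10 (((v : ℤ) * n + u).natAbs.factorization p))
  obtain ⟨c, hc⟩ : ∃ c, (S ∩ f ⁻¹' {c}).Infinite := by
    by_contra! h
    refine hinf ((Set.finite_iUnion h).subset fun n hn => ?_)
    exact Set.mem_iUnion.2 ⟨f n, hn, rfl⟩
  obtain ⟨N₁, hN₁⟩ := exists_forall_ne_pow_ten hv hu
  obtain ⟨a, ⟨haS, hac⟩, haN⟩ := hc.exists_gt (N₁ + u.natAbs)
  obtain ⟨N₂, hN₂⟩ := hN₁ a (by omega)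
  obtain ⟨b, ⟨hbS, hbc⟩, hbN⟩ := hc.exists_gt (N₂ + u.natAbs)
  have hpos : ∀ n : ℕ, u.natAbs < n → 0 < (v : ℤ) * n + u := by
    intro n hn
    have : (1 : ℤ) * n ≤ v * n := by gcongr; exact_mod_cast hv
    omega
  have hfab : f a = f b := by rw [hac, hbc]
  have hmod : ∀ p ≤ B, a.factorization p % 10 = b.factorization p % 10 ∧
      ((v : ℤ) * a + u).natAbs.factorization p % 10 =
        ((v : ℤ) * b + u).natAbs.factorization p % 10 := by
    intro p hp
    have h := congrFun hfab ⟨p, by omega⟩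
    simp only [f, Prod.mk.injEq, Fin.ext_iff, Fin.ofNat] at h
    exact h
  have hprime : ∀ n ∈ S, (∀ p, p.Prime → p ∣ n → p ≤ B) ∧
      ∀ p, p.Prime → p ∣ ((v : ℤ) * n + u).natAbs → p ≤ B := by
    refine fun n hn => ⟨fun p hp hd => hn p hp ?_, fun p hp hd => hn p hp ?_⟩
    · exact Dvd.dvd.mul_right (Int.natCast_dvd_natCast.2 hd) _
    · exact Dvd.dvd.mul_left (Int.natCast_dvd.2 hd) _
  have ha' := hpos a (by omega)
  have hb' := hpos b (by omega)
  obtain ⟨s, hs⟩ := exists_mul_pow_nine_eq_pow_ten (by omega) (by omega) (hprime b hbS).1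
    (hprime a haS).1 fun p hp => (hmod p hp).1.symm
  obtain ⟨t, ht⟩ := exists_mul_pow_nine_eq_pow_ten (Int.natAbs_ne_zero.2 hb'.ne')
    (Int.natAbs_ne_zero.2 ha'.ne') (hprime b hbS).2 (hprime a haS).2
    fun p hp => (hmod p hp).2.symm
  refine hN₂ b (by omega) s t hs ?_
  have : (((((v : ℤ) * b + u).natAbs * ((v : ℤ) * a + u).natAbs ^ 9 : ℕ)) : ℤ) = (t : ℤ) ^ 10 := by
    rw [ht]
    push_cast
    rfl
  rwa [Nat.cast_mul, Nat.cast_pow, Int.natCast_natAbs, Int.natCast_natAbs, abs_of_pos ha',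
    abs_of_pos hb'] at this

lemma mul_div_add_mul_div_le (m q : ℕ) (hq : 0 < q) :
    3 * m / q + 2 * (2 * m / q) ≤ 6 * m / q + m / q := by
  obtain ⟨a, r, hr, rfl⟩ : ∃ a r, r < q ∧ m = q * a + r :=
    ⟨m / q, m % q, Nat.mod_lt _ hq, (Nat.div_add_mod m q).symm⟩
  have h : ∀ c, c * (q * a + r) / q = c * a + c * r / q := fun c => by
    rw [show c * (q * a + r) = q * (c * a) + c * r by ring, Nat.mul_add_div hq]
  have h1 : (q * a + r) / q = a := by
    rw [Nat.mul_add_div hq, Nat.div_eq_of_lt hr, add_zero]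
  rw [h, h, h, h1]
  suffices h' : 3 * r / q + 2 * (2 * r / q) ≤ 6 * r / q by omega
  have hlo : ∀ c, c * r / q * q ≤ c * r := fun c => Nat.div_mul_le_self _ _
  have hhi : ∀ c, c * r < (c * r / q + 1) * q := fun c => by
    rw [mul_comm _ q]
    exact Nat.lt_mul_div_succ _ hq
  have l2 := hlo 2
  have l3 := hlo 3
  have u6 := hhi 6
  have b2 : 2 * r / q < 2 := Nat.div_lt_of_lt_mul (by omega)
  have b3 : 3 * r / q < 3 := Nat.div_lt_of_lt_mul (by omega)
  have b6 : 6 * r / q < 6 := Nat.div_lt_of_lt_mul (by omega)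
  generalize 2 * r / q = x at *
  generalize 3 * r / q = y at *
  generalize 6 * r / q = z at *
  interval_cases x <;> interval_cases y <;> interval_cases z <;> omega

lemma factorization_primorial {p : ℕ} (hp : p.Prime) (n : ℕ) :
    (primorial n).factorization p = if p ≤ n then 1 else 0 := by
  split_ifs with h
  · exact Nat.factorization_eq_one_of_squarefree (squarefree_primorial n) hp
      (hp.dvd_primorial_iff.2 h)
  · exact Nat.factorization_eq_zero_of_not_dvd fun hd => h (hp.dvd_primorial_iff.1 hd)

lemma primorial_mul_factorial_dvd (m : ℕ) :
    primorial (6 * m) * ((3 * m).factorial * (2 * m).factorial ^ 2) ∣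
      primorial (2 * m) * ((6 * m).factorial * m.factorial) := by
  have h0 : ∀ n : ℕ, n.factorial ≠ 0 := Nat.factorial_ne_zero
  have hpr : ∀ n, primorial n ≠ 0 := primorial_ne_zero
  rw [← Nat.factorization_le_iff_dvd (by simp [h0, hpr]) (by simp [h0, hpr])]
  intro p
  by_cases hp : p.Prime
  swap
  · simp [Nat.factorization_eq_zero_of_not_prime _ hp]
  have hf : ∀ n, n ≤ 6 * m → n.factorial.factorization p =
      ∑ i ∈ Ico 1 (Nat.log p (6 * m) + 1), n / p ^ i := fun n hn =>
    Nat.factorization_factorial hp (Nat.lt_succ_of_le (Nat.log_mono_right hn))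
  rw [Nat.factorization_mul (hpr _) (by simp [h0]), Nat.factorization_mul (h0 _) (by simp [h0]),
    Nat.factorization_pow, Nat.factorization_mul (hpr _) (by simp [h0]),
    Nat.factorization_mul (h0 _) (h0 _)]
  simp only [Finsupp.add_apply, Finsupp.smul_apply, smul_eq_mul]
  rw [factorization_primorial hp, factorization_primorial hp, hf _ le_rfl,
    hf (3 * m) (by omega), hf (2 * m) (by omega), hf m (by omega),
    mul_sum, ← sum_add_distrib, ← sum_add_distrib]
  have hterm : ∀ i, 3 * m / p ^ i + 2 * (2 * m / p ^ i) ≤ 6 * m / p ^ i + m / p ^ i :=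
    fun i => mul_div_add_mul_div_le m _ (pow_pos hp.pos i)
  by_cases hp2 : p ≤ 2 * m
  · rw [if_pos hp2, if_pos (by omega)]
    exact Nat.add_le_add_left (sum_le_sum fun i _ => hterm i) 1
  rw [if_neg hp2, zero_add]
  split_ifs with hp6
  · have h1 : 1 ∈ Ico 1 (Nat.log p (6 * m) + 1) := by
      have := Nat.log_pos hp.one_lt hp6
      simp only [mem_Ico]
      omega
    rw [add_comm, Nat.add_one_le_iff]
    refine sum_lt_sum (fun i _ => hterm i) ⟨1, h1, ?_⟩
    rw [pow_one, Nat.div_eq_of_lt (by omega : 2 * m < p), Nat.div_eq_of_lt (by omega : m < p)]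
    by_cases hp3 : p ≤ 3 * m
    · have h2 : 2 ≤ 6 * m / p := (Nat.le_div_iff_mul_le hp.pos).2 (by omega)
      have h3 : 3 * m / p < 2 := Nat.div_lt_of_lt_mul (by omega)
      omega
    · have h2 : 1 ≤ 6 * m / p := (Nat.le_div_iff_mul_le hp.pos).2 (by omega)
      rw [Nat.div_eq_of_lt (by omega : 3 * m < p)]
      omega
  · rw [zero_add]
    exact sum_le_sum fun i _ => hterm i

lemma factorial_mul_factorial_le (m : ℕ) : (6 * m).factorial * m.factorial ≤
    108 ^ m * ((3 * m).factorial * (2 * m).factorial ^ 2) := by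
  induction m with
  | zero => simp
  | succ m ih =>
    rw [show 6 * (m + 1) = 6 * m + 6 by ring, show 3 * (m + 1) = 3 * m + 3 by ring,
      show 2 * (m + 1) = 2 * m + 2 by ring]
    simp only [Nat.factorial_succ]
    set c := 24 * ((3 * m + 3) * (3 * m + 2) * (3 * m + 1)) * (2 * m + 1) * (m + 1) with hc
    calc _ = c * ((6 * m + 5) * (6 * m + 1)) * ((6 * m).factorial * m.factorial) := by
          rw [hc]
          ring
      _ ≤ c * (18 * (m + 1) * (2 * m + 1)) *
          (108 ^ m * ((3 * m).factorial * (2 * m).factorial ^ 2)) := by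
          exact Nat.mul_le_mul (Nat.mul_le_mul_left _ (by nlinarith)) ih
      _ = _ := by
          rw [hc]
          ring

lemma primorial_six_mul_le (m : ℕ) : primorial (6 * m) ≤ primorial (2 * m) * 108 ^ m := by
  have h := Nat.le_of_dvd (by have := primorial_pos (2 * m); positivity)
    (primorial_mul_factorial_dvd m)
  refine Nat.le_of_mul_le_mul_right (h.trans ?_)
    (by positivity : 0 < (3 * m).factorial * (2 * m).factorial ^ 2)
  rw [mul_assoc]
  exact Nat.mul_le_mul_left _ (factorial_mul_factorial_le m)

/-- An improvement on `primorial_le_four_pow`, up to a constant factor. -/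
lemma exists_primorial_le : ∃ A : ℕ, ∀ x, 2 ^ x * primorial x ≤ A * 7 ^ x := by
  obtain ⟨m₀, hm₀⟩ : ∃ m₀ : ℕ, ∀ m, m₀ ≤ m → 1728 ^ m * (11 * m) ^ 5 ≤ 2401 ^ m := by
    have h := tendsto_pow_const_mul_const_pow_of_abs_lt_one 5 (r := 1728 / 2401)
      (by rw [abs_of_pos] <;> norm_num)
    have h2 := h.eventually (gt_mem_nhds (by norm_num : (0 : ℝ) < 1 / 11 ^ 5))
    obtain ⟨m₀, hm₀⟩ := Filter.eventually_atTop.1 h2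
    refine ⟨m₀, fun m hm => ?_⟩
    have h3 := hm₀ m hm
    rw [div_pow, ← mul_div_assoc, div_lt_div_iff₀ (by positivity) (by positivity)] at h3
    have h4 : (1728 : ℝ) ^ m * (11 * m) ^ 5 ≤ 2401 ^ m := by
      rw [mul_pow]
      linarith
    exact_mod_cast h4
  refine ⟨8 ^ (6 * m₀ + 6), fun x => ?_⟩
  induction x using Nat.strong_induction_on with
  | _ x ih =>
    rcases lt_or_ge x (6 * m₀ + 6) with hx | hx
    · calc 2 ^ x * primorial x ≤ 2 ^ x * 4 ^ x := by gcongr; exact primorial_le_four_pow x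
        _ = 8 ^ x := by rw [← mul_pow]; norm_num
        _ ≤ 8 ^ (6 * m₀ + 6) := Nat.pow_le_pow_right (by norm_num) hx.le
        _ ≤ _ := Nat.le_mul_of_pos_right _ (by positivity)
    · obtain ⟨m, s, hs, rfl⟩ : ∃ m s, s < 6 ∧ x = 6 * m + s :=
        ⟨x / 6, x % 6, Nat.mod_lt _ (by norm_num), (Nat.div_add_mod x 6).symm⟩
      set A := 8 ^ (6 * m₀ + 6)
      have h1 : primorial (6 * m + s) ≤ primorial (2 * m) * 108 ^ m * (11 * m) ^ 5 := by
        refine (primorial_add_le (by omega)).trans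
          (Nat.mul_le_mul (primorial_six_mul_le m) ?_)
        rw [Nat.choose_symm_add]
        calc (6 * m + s).choose s ≤ (6 * m + s) ^ s := Nat.choose_le_pow _ _
          _ ≤ (11 * m) ^ s := Nat.pow_le_pow_left (by omega) _
          _ ≤ (11 * m) ^ 5 := Nat.pow_le_pow_right (by omega) (by omega)
      calc 2 ^ (6 * m + s) * primorial (6 * m + s)
          ≤ 2 ^ (6 * m + s) * (primorial (2 * m) * 108 ^ m * (11 * m) ^ 5) := by gcongr
        _ = 2 ^ s * (2 ^ (2 * m) * primorial (2 * m)) * ((16 * 108) ^ m * (11 * m) ^ 5) := by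
            rw [mul_pow 16, show 16 = 2 ^ 4 by norm_num, ← pow_mul]
            ring
        _ ≤ 7 ^ s * (A * 7 ^ (2 * m)) * 2401 ^ m := by
            exact Nat.mul_le_mul (Nat.mul_le_mul (Nat.pow_le_pow_left (by norm_num) s)
              (ih _ (by omega))) (hm₀ m (by omega))
        _ = A * 7 ^ (6 * m + s) := by
            rw [show 2401 = 7 ^ 4 by norm_num, ← pow_mul]
            ring

lemma apProd_le {v : ℕ} (hv : 1 ≤ v) (u : ℤ) (K : ℕ) :
    apProd v u 0 K ≤ v ^ K * (K + u.natAbs).factorial := by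
  induction K with
  | zero => simpa [apProd] using Nat.one_le_iff_ne_zero.2 (Nat.factorial_ne_zero _)
  | succ K ih =>
    rw [apProd, prod_Ioc_succ_top (Nat.zero_le _), ← apProd,
      show K + 1 + u.natAbs = (K + u.natAbs) + 1 by ring, Nat.factorial_succ]
    have h1 : ((v : ℤ) * (K + 1 : ℕ) + u).natAbs ≤ v * (K + 1) + u.natAbs := by
      refine (Int.natAbs_add_le _ _).trans (add_le_add_left (le_of_eq ?_) _)
      rw [← Nat.cast_mul, Int.natAbs_natCast]
    have h2 : u.natAbs ≤ v * u.natAbs := Nat.le_mul_of_pos_left _ hv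
    calc _ ≤ (v ^ K * (K + u.natAbs).factorial) * (v * (K + u.natAbs + 1)) :=
          Nat.mul_le_mul ih (by nlinarith)
      _ = _ := by ring

lemma pow_mul_descFactorial_le_apProd (v : ℕ) (u : ℤ) {k n : ℕ} (hk : k ≤ n) :
    v ^ k * (n - u.natAbs).descFactorial k ≤ apProd v u (n - k) n := by
  induction k with
  | zero => simp [apProd]
  | succ k ih =>
    have h1 : apProd v u (n - (k + 1)) n = ((v : ℤ) * (n - k : ℕ) + u).natAbs *
        apProd v u (n - k) n := by
      rw [apProd, ← prod_Ioc_consecutive _ (by omega : n - (k + 1) ≤ n - k) (Nat.sub_le n k),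
        show n - k = n - (k + 1) + 1 by omega, prod_Ioc_succ_top le_rfl, Ioc_self, prod_empty,
        one_mul, apProd]
    have h2 : v * (n - u.natAbs - k) ≤ ((v : ℤ) * (n - k : ℕ) + u).natAbs := by
      rcases le_or_gt (n - k) u.natAbs with h | h
      · rw [show n - u.natAbs - k = 0 by omega]
        simp
      · obtain ⟨d, hd⟩ : ∃ d, n - k = u.natAbs + d := ⟨n - k - u.natAbs, by omega⟩
        rw [hd, show n - u.natAbs - k = d by omega]
        rcases Nat.eq_zero_or_pos v with rfl | hv
        · simp
        have h3 : u.natAbs ≤ v * u.natAbs := Nat.le_mul_of_pos_left _ hv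
        rw [← Nat.cast_mul, mul_add]
        omega
    rw [h1, Nat.descFactorial_succ, pow_succ]
    calc _ = (v * (n - u.natAbs - k)) * (v ^ k * (n - u.natAbs).descFactorial k) := by ring
      _ ≤ _ := Nat.mul_le_mul h2 (ih (by omega))

lemma apProd_dvd {v : ℕ} {u : ℤ} (huv : IsCoprime (v : ℤ) u)
    (hne : ∀ i : ℕ, 1 ≤ i → (v : ℤ) * i + u ≠ 0) {k n K Y : ℕ} (hk : k ≤ K) (hKn : K ≤ n)
    (hp : ∀ p, p.Prime → K < p → p ∣ apProd v u (n - k) n → p ∣ apProd v u 0 K)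
    (hY : K ≤ Y ∧ v * K + u.natAbs ≤ Y ∨ v * n + u.natAbs < (Y + 1) ^ 2) :
    apProd v u (n - k) n ∣ apProd v u 0 K * primorial K *
      ∏ p ∈ Nat.primesLE Y, p ^ Nat.log p (v * n + u.natAbs) := by
  set M := v * n + u.natAbs with hM
  have hM' : ∀ i, 1 ≤ i → i ≤ n → ((v : ℤ) * i + u).natAbs ≤ M := fun i _ hi =>
    natAbs_mul_add_le v u hi
  have hprod0 : ∏ p ∈ Nat.primesLE Y, p ^ Nat.log p M ≠ 0 :=
    Finset.prod_ne_zero_iff.2 fun p hp => pow_ne_zero _ (Nat.prime_of_mem_primesLE hp).ne_zero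
  have hR0 := apProd_ne_zero hne 0 K
  have hP0 := primorial_ne_zero K
  rw [← Nat.factorization_le_iff_dvd (apProd_ne_zero hne _ _)
    (mul_ne_zero (mul_ne_zero hR0 hP0) hprod0)]
  intro p
  by_cases hpp : p.Prime
  swap
  · simp [Nat.factorization_eq_zero_of_not_prime _ hpp]
  rw [Nat.factorization_mul (mul_ne_zero hR0 hP0) hprod0, Nat.factorization_mul hR0 hP0]
  simp only [Finsupp.add_apply]
  rw [factorization_primorial hpp]
  rcases le_or_gt p Y with hpY | hpY
  · have h1 : Nat.log p M ≤ (∏ p ∈ Nat.primesLE Y, p ^ Nat.log p M).factorization p := by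
      rw [← hpp.pow_dvd_iff_le_factorization hprod0]
      exact dvd_prod_of_mem (fun p => p ^ Nat.log p M) (Nat.mem_primesLE.2 ⟨hpY, hpp⟩)
    have h2 := factorization_apProd_le_add_log huv hne hpp (Nat.sub_le n k)
      (by omega : n - (n - k) ≤ K) hKn hM'
    omega
  · rcases hY with ⟨hY1, hY2⟩ | hY
    · rw [Nat.factorization_eq_zero_of_not_dvd]
      · exact Nat.zero_le _
      · intro hd
        exact not_dvd_apProd_of_lt hne hpp (by omega) (hp p hpp (by omega) hd)
    · have hMp : M < p ^ 2 := hY.trans_le (Nat.pow_le_pow_left hpY 2)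
      split_ifs with hpK
      · have h2 := factorization_apProd_le_add_log huv hne hpp (Nat.sub_le n k)
          (by omega : n - (n - k) ≤ K) hKn hM'
        have h3 : Nat.log p M < 2 := Nat.log_lt_of_lt_pow' (by norm_num) hMp
        omega
      · have h2 := factorization_apProd_le_of_lt_sq huv hne hpp (Nat.sub_le n k)
          (by omega : n - (n - k) ≤ p) hMp hM' (hp p hpp (by omega))
        omega

lemma choose_le_pow_mul_choose_sub {n k w : ℕ} (h : k + w ≤ n) :
    n.choose k ≤ n ^ w * (n - w).choose k := by
  induction w with
  | zero => simp
  | succ w ih =>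
    obtain ⟨m, hm⟩ : ∃ m, n - w = m + 1 := ⟨n - w - 1, by omega⟩
    have h1 := Nat.choose_mul_succ_eq m k
    refine (ih (by omega)).trans ?_
    rw [show n - (w + 1) = m by omega, hm, pow_succ, mul_assoc]
    refine Nat.mul_le_mul_left _ ?_
    have h2 : 1 ≤ m + 1 - k := by omega
    calc (m + 1).choose k ≤ (m + 1).choose k * (m + 1 - k) := Nat.le_mul_of_pos_right _ h2
      _ = m.choose k * (m + 1) := h1.symm
      _ ≤ n * m.choose k := by rw [mul_comm]; exact Nat.mul_le_mul_right _ (by omega)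

/-- If no large prime divides the last `k` terms of the progression without dividing the first
ones, then `n.choose k` is at most a primorial, up to a small factor. -/
lemma choose_le_of_forall_prime_dvd {v : ℕ} (hv : 1 ≤ v) {u : ℤ} (huv : IsCoprime (v : ℤ) u)
    (hne : ∀ i : ℕ, 1 ≤ i → (v : ℤ) * i + u ≠ 0) {k n c Y : ℕ}
    (hkn : 2 * k ≤ n) (hn : 2 * (v + c + u.natAbs) ≤ n)
    (hp : ∀ p, p.Prime → k + c < p → p ∣ apProd v u (n - k) n → p ∣ apProd v u 0 (k + c))
    (hY : k + c ≤ Y ∧ v * (k + c) + u.natAbs ≤ Y ∨ v * n + u.natAbs < (Y + 1) ^ 2) :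
    n.choose k ≤ n ^ (2 * (c + u.natAbs)) * primorial (k + c) * n ^ (2 * Y.primeCounting) := by
  set w := u.natAbs with hw
  have hn1 : 1 ≤ n := by omega
  have h1 := Nat.le_of_dvd (by
      have h1 := Nat.pos_of_ne_zero (apProd_ne_zero hne 0 (k + c))
      have h2 := primorial_pos (k + c)
      have h3 : 0 < ∏ p ∈ Nat.primesLE Y, p ^ Nat.log p (v * n + w) :=
        Finset.prod_pos fun p hp => pow_pos (Nat.prime_of_mem_primesLE hp).pos _
      positivity)
    (apProd_dvd huv hne (Nat.le_add_right k c) (by omega) hp hY)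
  have h2 : ∏ p ∈ Nat.primesLE Y, p ^ Nat.log p (v * n + w) ≤ n ^ (2 * Y.primeCounting) := by
    rw [pow_mul, ← Nat.primesLE_card_eq_primeCounting]
    refine prod_le_pow_card _ _ _ fun p hp => (Nat.pow_log_le_self p (by positivity)).trans ?_
    nlinarith
  have h3 := (pow_mul_descFactorial_le_apProd v u (by omega : k ≤ n)).trans
    (h1.trans (Nat.mul_le_mul (Nat.mul_le_mul_right _ (apProd_le hv u (k + c))) h2))
  have h4 : (k + c + w).factorial ≤ k.factorial * n ^ (c + w) := by
    rw [add_assoc, ← Nat.factorial_mul_ascFactorial]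
    exact Nat.mul_le_mul_left _ ((Nat.ascFactorial_le_pow_add _ _).trans
      (Nat.pow_le_pow_left (by omega) _))
  have h5 : (n - w).choose k ≤ v ^ c * n ^ (c + w) * primorial (k + c) *
      n ^ (2 * Y.primeCounting) := by
    rw [Nat.descFactorial_eq_factorial_mul_choose] at h3
    refine Nat.le_of_mul_le_mul_left ?_ (by positivity : 0 < v ^ k * k.factorial)
    calc v ^ k * k.factorial * (n - w).choose k = v ^ k * (k.factorial * (n - w).choose k) := by
          ring
      _ ≤ _ := h3
      _ ≤ v ^ (k + c) * (k.factorial * n ^ (c + w)) * primorial (k + c) *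
          n ^ (2 * Y.primeCounting) := by gcongr
      _ = _ := by ring
  calc n.choose k ≤ n ^ w * (n - w).choose k := choose_le_pow_mul_choose_sub (by omega)
    _ ≤ n ^ w * (n ^ c * n ^ (c + w) * primorial (k + c) * n ^ (2 * Y.primeCounting)) := by
        refine Nat.mul_le_mul_left _ (h5.trans ?_)
        gcongr
        omega
    _ = _ := by ring

lemma exists_mul_primeCounting_le (D : ℕ) : ∃ N : ℕ, ∀ x, N ≤ x → D * x.primeCounting ≤ x := by
  have h1 := Chebyshev.eventually_primeCounting_le (ε := 1) one_pos
  have h2 := Real.tendsto_log_atTop.eventually_ge_atTop (D * (Real.log 4 + 1) + 1)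
  obtain ⟨N, hN⟩ := Filter.eventually_atTop.1
    (tendsto_natCast_atTop_atTop.eventually (h1.and h2))
  refine ⟨N, fun x hx => ?_⟩
  obtain ⟨h3, h4⟩ := hN x hx
  rw [Nat.floor_natCast] at h3
  have h0 : 0 ≤ Real.log 4 := Real.log_nonneg (by norm_num)
  have hlog : 0 < Real.log x := lt_of_lt_of_le (by positivity) h4
  rw [le_div_iff₀ hlog] at h3
  have h5 : (D : ℝ) * x.primeCounting * Real.log x ≤ x * Real.log x := by
    calc (D : ℝ) * x.primeCounting * Real.log x = D * (x.primeCounting * Real.log x) := by ring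
      _ ≤ D * ((Real.log 4 + 1) * x) := by gcongr
      _ = x * (D * (Real.log 4 + 1)) := by ring
      _ ≤ x * Real.log x := by gcongr; linarith
  exact_mod_cast le_of_mul_le_mul_right h5 hlog

lemma pow_le_mul_choose {n k : ℕ} (h : 2 * k ≤ n) : n ^ k ≤ (2 * k) ^ k * n.choose k := by
  calc n ^ k ≤ (2 * (n + 1 - k)) ^ k := Nat.pow_le_pow_left (by omega) _
    _ = 2 ^ k * (n + 1 - k) ^ k := mul_pow _ _ _
    _ ≤ 2 ^ k * n.descFactorial k := Nat.mul_le_mul_left _ (Nat.pow_sub_le_descFactorial n k)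
    _ = 2 ^ k * (k.factorial * n.choose k) := by rw [Nat.descFactorial_eq_factorial_mul_choose]
    _ ≤ 2 ^ k * (k ^ k * n.choose k) := by gcongr; exact Nat.factorial_le_pow k
    _ = _ := by rw [mul_pow, mul_assoc]

lemma lt_choose_of_pow_le {k n c E P : ℕ} (hk : 1 ≤ k) (hkn : 2 * k ≤ n) (hck : c ≤ k)
    (hE : 16 * E ≤ k) (hP : 32 * P ≤ k) (h4 : k ^ 4 ≤ n ^ 3) (hn : 2 ^ 40 < n) :
    n ^ E * primorial (k + c) * n ^ (2 * P) < n.choose k := by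
  by_contra! h
  have h1 : n ^ k ≤ 16 ^ k * n.choose k ^ 4 := by
    refine Nat.le_of_mul_le_mul_left ?_ (by positivity : 0 < n ^ (3 * k))
    calc n ^ (3 * k) * n ^ k = (n ^ k) ^ 4 := by ring
      _ ≤ ((2 * k) ^ k * n.choose k) ^ 4 := Nat.pow_le_pow_left (pow_le_mul_choose hkn) 4
      _ = 16 ^ k * (k ^ 4) ^ k * n.choose k ^ 4 := by
          rw [show 16 ^ k = 2 ^ (4 * k) by rw [pow_mul]; norm_num]
          ring
      _ ≤ 16 ^ k * (n ^ 3) ^ k * n.choose k ^ 4 := by gcongr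
      _ = _ := by rw [← pow_mul n]; ring
  have h2 : n.choose k ≤ n ^ (E + 2 * P) * 4 ^ (2 * k) := by
    refine h.trans ?_
    calc _ = n ^ (E + 2 * P) * primorial (k + c) := by ring
      _ ≤ n ^ (E + 2 * P) * 4 ^ (2 * k) := by
        gcongr
        exact (primorial_le_four_pow _).trans (Nat.pow_le_pow_right (by norm_num) (by omega))
  have h3 : (n ^ k) ^ 2 ≤ (2 ^ 40) ^ k * n ^ k := by
    calc (n ^ k) ^ 2 ≤ (16 ^ k * (n ^ (E + 2 * P) * 4 ^ (2 * k)) ^ 4) ^ 2 :=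
          Nat.pow_le_pow_left (h1.trans (by gcongr)) 2
      _ = (2 ^ 40) ^ k * n ^ (8 * E + 16 * P) := by
        rw [show 16 = 2 ^ 4 by norm_num, show 4 = 2 ^ 2 by norm_num]
        simp only [← pow_mul, mul_pow]
        ring
      _ ≤ (2 ^ 40) ^ k * n ^ k := by
        gcongr
        · omega
        · omega
  rw [sq] at h3
  have h5 := Nat.le_of_mul_le_mul_right h3 (by positivity)
  exact absurd ((Nat.pow_le_pow_iff_left (by omega)).1 h5) (by omega)

lemma exists_pow_lt_of_lt_pow (E A V : ℕ) : ∃ N : ℕ, ∀ n k P : ℕ, N ≤ n → n ^ 3 < k ^ 4 →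
    P ^ 2 ≤ V * n → 7 ^ k * A * n ^ (E + 2 * P) < 8 ^ k := by
  set δ := Real.log 8 - Real.log 7 with hδ
  have hδ0 : 0 < δ := sub_pos.2 (Real.log_lt_log (by norm_num) (by norm_num))
  set c : ℝ := E + 2 * V with hc
  have h1 := (isLittleO_log_rpow_atTop (by norm_num : (0 : ℝ) < 1 / 4)).bound
    (by positivity : 0 < δ / (2 * (c + 1)))
  have h2 := (tendsto_rpow_atTop (by norm_num : (0 : ℝ) < 3 / 4)).eventually_gt_atTop
    (Real.log A / (δ / 2))
  obtain ⟨N, hN⟩ := Filter.eventually_atTop.1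
    (tendsto_natCast_atTop_atTop.eventually (h1.and h2))
  refine ⟨N + 1, fun n k P hn hk hP => ?_⟩
  obtain ⟨h3, h4⟩ := hN n (by omega)
  have hn1 : (1 : ℝ) ≤ n := by exact_mod_cast (by omega : 1 ≤ n)
  have hn0 : (0 : ℝ) < n := by linarith
  have hlog : 0 ≤ Real.log n := Real.log_nonneg hn1
  rw [Real.norm_of_nonneg hlog, Real.norm_of_nonneg (by positivity)] at h3
  rw [div_lt_iff₀ (by positivity)] at h4
  have hk34 : (n : ℝ) ^ (3 / 4 : ℝ) < k := by
    have h5 : ((n : ℝ) ^ (3 / 4 : ℝ)) ^ 4 = n ^ 3 := by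
      rw [← Real.rpow_natCast, ← Real.rpow_mul hn0.le]
      norm_num
    refine lt_of_pow_lt_pow_left₀ 4 (by positivity) ?_
    rw [h5]
    exact_mod_cast hk
  have hsplit : (n : ℝ) ^ (3 / 4 : ℝ) = n ^ (1 / 2 : ℝ) * n ^ (1 / 4 : ℝ) := by
    rw [← Real.rpow_add hn0]
    norm_num
  have hhalf : (1 : ℝ) ≤ (n : ℝ) ^ (1 / 2 : ℝ) := Real.one_le_rpow hn1 (by norm_num)
  have hP' : (P : ℝ) ≤ V * n ^ (1 / 2 : ℝ) := by
    refine le_of_sq_le_sq ?_ (by positivity)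
    have h5 : ((n : ℝ) ^ (1 / 2 : ℝ)) ^ 2 = n := by
      rw [← Real.sqrt_eq_rpow, Real.sq_sqrt hn0.le]
    rw [mul_pow, h5]
    have h6 : (P : ℝ) ^ 2 ≤ V * n := by exact_mod_cast hP
    have h7 : (V : ℝ) ≤ V ^ 2 := by exact_mod_cast Nat.le_self_pow (by norm_num) V
    nlinarith
  have hexp : ((E : ℝ) + 2 * P) * Real.log n < n ^ (3 / 4 : ℝ) * (δ / 2) := by
    have h5 : (E : ℝ) + 2 * P ≤ c * n ^ (1 / 2 : ℝ) := by
      have : (E : ℝ) ≤ E * n ^ (1 / 2 : ℝ) := le_mul_of_one_le_right (by positivity) hhalf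
      rw [hc]
      linarith
    have h6 : 0 < (n : ℝ) ^ (1 / 2 : ℝ) * n ^ (1 / 4 : ℝ) := by positivity
    calc ((E : ℝ) + 2 * P) * Real.log n
        ≤ (c * n ^ (1 / 2 : ℝ)) * (δ / (2 * (c + 1)) * n ^ (1 / 4 : ℝ)) := by gcongr
      _ = (n ^ (1 / 2 : ℝ) * n ^ (1 / 4 : ℝ)) * ((c / (c + 1)) * (δ / 2)) := by
          field_simp
      _ < (n ^ (1 / 2 : ℝ) * n ^ (1 / 4 : ℝ)) * (1 * (δ / 2)) := by
          gcongr
          rw [div_lt_one (by positivity)]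
          linarith
      _ = _ := by rw [hsplit, one_mul]
  rcases Nat.eq_zero_or_pos A with rfl | hA
  · simp
  have hA' : (0 : ℝ) < A := by exact_mod_cast hA
  have hmain : Real.log (7 ^ k * A * n ^ (E + 2 * P)) < Real.log (8 ^ k) := by
    rw [Real.log_mul (by positivity) (by positivity), Real.log_mul (by positivity) (by positivity),
      Real.log_pow, Real.log_pow, Real.log_pow]
    push_cast
    nlinarith
  have := (Real.log_lt_log_iff (by positivity) (by positivity)).1 hmain
  exact_mod_cast this

/-- All sufficiently long final segments of the progression have a large prime divisor which does
not divide the first terms. -/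
lemma exists_prime_dvd_apProd {v : ℕ} (hv : 1 ≤ v) {u : ℤ} (huv : IsCoprime (v : ℤ) u)
    (hne : ∀ i : ℕ, 1 ≤ i → (v : ℤ) * i + u ≠ 0) (c : ℕ) :
    ∃ k₀ n₀ : ℕ, ∀ k n, k₀ ≤ k → n₀ ≤ n → 2 * k ≤ n →
      ∃ p, p.Prime ∧ k + c < p ∧ p ∣ apProd v u (n - k) n ∧ ¬ p ∣ apProd v u 0 (k + c) := by
  set w := u.natAbs with hw
  set E := 2 * (c + w) with hE
  obtain ⟨A, hA⟩ := exists_primorial_le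
  obtain ⟨N₁, hN₁⟩ := exists_mul_primeCounting_le (32 * ((v + 1) * (1 + c) + w))
  obtain ⟨N₂, hN₂⟩ := exists_pow_lt_of_lt_pow (E + 1) (A * 7 ^ c) (v + w)
  refine ⟨1 + c + 16 * E + N₁, 2 ^ 40 + 1 + 2 * (v + c + w) + N₂, fun k n hk hn hkn => ?_⟩
  by_contra! h
  have hk1 : 1 ≤ k := by omega
  rcases le_or_gt (k ^ 4) (n ^ 3) with h4 | h4
  · set Y := (v + 1) * (k + c) + w with hY
    have h1 := choose_le_of_forall_prime_dvd (Y := Y) hv huv hne hkn (by omega) h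
      (Or.inl (by constructor <;> rw [hY, add_one_mul] <;> omega))
    have h2 : Y ≤ ((v + 1) * (1 + c) + w) * k := by
      rw [hY]
      have : c ≤ c * k := Nat.le_mul_of_pos_right _ hk1
      have : w ≤ w * k := Nat.le_mul_of_pos_right _ hk1
      calc (v + 1) * (k + c) + w ≤ (v + 1) * (k + c * k) + w * k := by gcongr
        _ = _ := by ring
    have hkY : k ≤ Y := by rw [hY, add_one_mul]; omega
    have h3 : 32 * Y.primeCounting ≤ k := by
      have := (hN₁ Y (by omega)).trans h2
      refine Nat.le_of_mul_le_mul_left ?_ (by positivity : 0 < (v + 1) * (1 + c) + w)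
      calc _ = 32 * ((v + 1) * (1 + c) + w) * Y.primeCounting := by ring
        _ ≤ _ := this
    exact absurd h1 (lt_choose_of_pow_le hk1 hkn (by omega) (by omega) h3 h4 (by omega)).not_ge
  · set Y := Nat.sqrt (v * n + w) with hY
    have h1 := choose_le_of_forall_prime_dvd (Y := Y) hv huv hne hkn (by omega) h
      (Or.inr (Nat.lt_succ_sqrt' _))
    have hYn : Y ^ 2 ≤ (v + w) * n := by
      refine (Nat.sqrt_le' _).trans ?_
      have : w ≤ w * n := Nat.le_mul_of_pos_right _ (by omega)
      rw [add_mul]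
      omega
    have hpi : Y.primeCounting ≤ Y := by
      rw [← Nat.primesLE_card_eq_primeCounting, Nat.primesLE_eq_filter_Ioc_zero]
      exact (card_filter_le _ _).trans (by simp)
    have h2 := hN₂ n k Y (by omega) h4 hYn
    have h3 : 4 ^ k ≤ n * n.choose k := by
      refine (Nat.four_pow_le_two_mul_self_mul_centralBinom k hk1).trans ?_
      rw [Nat.centralBinom_eq_two_mul_choose]
      exact Nat.mul_le_mul hkn (Nat.choose_le_choose k hkn)
    refine absurd h2 (not_lt.2 ?_)
    calc 8 ^ k = 2 ^ k * 4 ^ k := by rw [← mul_pow]; norm_num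
      _ ≤ 2 ^ (k + c) * (n * (n ^ E * primorial (k + c) * n ^ (2 * Y.primeCounting))) := by
        gcongr
        · norm_num
        · omega
        · exact h3.trans (Nat.mul_le_mul_left _ h1)
      _ = (2 ^ (k + c) * primorial (k + c)) * n ^ (E + 1 + 2 * Y.primeCounting) := by ring
      _ ≤ (A * 7 ^ (k + c)) * n ^ (E + 1 + 2 * Y) := by
        exact Nat.mul_le_mul (hA _) (Nat.pow_le_pow_right (by omega) (by omega))
      _ = _ := by ring

/-- An integral, monic rescaling of the Laguerre polynomial with parameter `u / v`. -/
def monicLaguerre (v : ℕ) (u : ℤ) (n : ℕ) : ℤ[X] :=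
  ∑ j ∈ range (n + 1), C ((n.choose j : ℤ) * ∏ i ∈ Ioc j n, ((v : ℤ) * (i : ℕ) + u)) * X ^ j

lemma coeff_monicLaguerre (v : ℕ) (u : ℤ) (n j : ℕ) : (monicLaguerre v u n).coeff j =
    (n.choose j : ℤ) * ∏ i ∈ Ioc j n, ((v : ℤ) * (i : ℕ) + u) := by
  simp only [monicLaguerre, finsetSum_coeff, coeff_C_mul_X_pow]
  rw [sum_ite_eq (range (n + 1)) j fun j =>
    (n.choose j : ℤ) * ∏ i ∈ Ioc j n, ((v : ℤ) * (i : ℕ) + u)]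
  split_ifs with h
  · rfl
  · rw [mem_range] at h
    rw [Nat.choose_eq_zero_of_lt (by omega), Nat.cast_zero, zero_mul]

lemma monic_monicLaguerre (v : ℕ) (u : ℤ) (n : ℕ) : (monicLaguerre v u n).Monic := by
  refine monic_of_natDegree_le_of_coeff_eq_one n ?_ ?_
  · refine natDegree_le_iff_coeff_eq_zero.2 fun j hj => ?_
    rw [coeff_monicLaguerre, Nat.choose_eq_zero_of_lt hj, Nat.cast_zero, zero_mul]
  · simp [coeff_monicLaguerre]

lemma natDegree_monicLaguerre (v : ℕ) (u : ℤ) (n : ℕ) : (monicLaguerre v u n).natDegree = n := by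
  refine natDegree_eq_of_le_of_coeff_ne_zero ?_ (by simp [coeff_monicLaguerre])
  refine natDegree_le_iff_coeff_eq_zero.2 fun j hj => ?_
  rw [coeff_monicLaguerre, Nat.choose_eq_zero_of_lt hj, Nat.cast_zero, zero_mul]

lemma padicValInt_coeff_zero_monicLaguerre_le {v : ℕ} {u : ℤ}
    (hne : ∀ i : ℕ, 1 ≤ i → (v : ℤ) * i + u ≠ 0) {p : ℕ} (hp : p.Prime) {n j : ℕ} (hj : j ≤ n) :
    padicValInt p ((monicLaguerre v u n).coeff 0) ≤
      padicValInt p ((monicLaguerre v u n).coeff j) + (apProd v u 0 j).factorization p := by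
  have : Fact p.Prime := ⟨hp⟩
  have hprod : ∀ a b : ℕ, ∏ i ∈ Ioc a b, ((v : ℤ) * (i : ℕ) + u) ≠ 0 := fun a b =>
    Finset.prod_ne_zero_iff.2 fun i hi => hne i (by rw [mem_Ioc] at hi; omega)
  have hch : (n.choose j : ℤ) ≠ 0 := by exact_mod_cast (Nat.choose_pos hj).ne'
  have h : (n.choose j : ℤ) * (monicLaguerre v u n).coeff 0 =
      (monicLaguerre v u n).coeff j * ∏ i ∈ Ioc 0 j, ((v : ℤ) * (i : ℕ) + u) := by
    rw [coeff_monicLaguerre, coeff_monicLaguerre, ← prod_Ioc_consecutive _ (Nat.zero_le j) hj,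
      Nat.choose_zero_right]
    push_cast
    ring
  have hval := congrArg (padicValInt p) h
  rw [padicValInt.mul hch (by simp [coeff_monicLaguerre, hprod]),
    padicValInt.mul (by rw [coeff_monicLaguerre]; exact mul_ne_zero hch (hprod _ _))
      (hprod _ _)] at hval
  have h2 : padicValInt p (∏ i ∈ Ioc 0 j, ((v : ℤ) * (i : ℕ) + u)) =
      (apProd v u 0 j).factorization p := by
    rw [padicValInt, Nat.factorization_def _ hp, apProd]
    exact congrArg _ (map_prod Int.natAbsHom _ _)
  omega

/-- There is a prime whose Newton polygon for `monicLaguerre v u n` rules out factors of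
degree `k`. -/
def ExcludesFactor (v : ℕ) (u : ℤ) (n k : ℕ) : Prop :=
  ∃ p l : ℕ, p.Prime ∧ l < k ∧ (∀ j, j < n - l → (p : ℤ) ∣ (monicLaguerre v u n).coeff j) ∧
    ∀ j, 1 ≤ j → k * (apProd v u 0 j).factorization p < j

lemma irreducible_monicLaguerre {v : ℕ} {u : ℤ} (hne : ∀ i : ℕ, 1 ≤ i → (v : ℤ) * i + u ≠ 0)
    {n : ℕ} (hn : 1 ≤ n)
    (h : ∀ k, 1 ≤ k → 2 * k ≤ n → ExcludesFactor v u n k) :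
    Irreducible (monicLaguerre v u n) := by
  rw [(monic_monicLaguerre v u n).irreducible_iff_natDegree']
  refine ⟨fun h1 => ?_, fun f g hf hg hfg hmem => ?_⟩
  · have := natDegree_monicLaguerre v u n
    rw [h1, natDegree_one] at this
    omega
  · rw [mem_Ioc, natDegree_monicLaguerre] at hmem
    obtain ⟨p, l, hp, hl, hdvd, hslope⟩ := h g.natDegree (by omega) (by omega)
    rw [mul_comm] at hfg
    refine natDegree_ne_of_slope_lt hp hg hf hl ?_ ?_ ?_
    · rwa [hfg, natDegree_monicLaguerre]
    · rw [hfg, coeff_monicLaguerre, Nat.choose_zero_right, Nat.cast_one, one_mul]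
      exact Finset.prod_ne_zero_iff.2 fun i hi => hne i (by rw [mem_Ioc] at hi; omega)
    · rw [hfg]
      intro j hj hc
      have hjn : j ≤ n := by
        by_contra! hlt
        rw [coeff_monicLaguerre, Nat.choose_eq_zero_of_lt hlt, Nat.cast_zero, zero_mul] at hc
        exact hc rfl
      have h1 := padicValInt_coeff_zero_monicLaguerre_le hne hp hjn
      have h2 := hslope j hj
      have h3 := Nat.mul_le_mul_left g.natDegree h1
      rw [mul_add] at h3
      omega

lemma irreducible_comp_C_mul_X {K : Type*} [Field K] {a : K} (ha : a ≠ 0) {f : K[X]}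
    (hf : Irreducible f) : Irreducible (f.comp (C a * X)) := by
  let _ : Invertible a := invertibleOfNonzero ha
  have h := (MulEquiv.irreducible_iff (algEquivCMulXAddC a 0)).2 hf
  simpa [algEquivCMulXAddC_apply, aeval_def, comp, eval₂_eq_eval_map] using h

lemma laguerre_eq {v : ℕ} (hv : v ≠ 0) (u : ℤ) (n : ℕ) : C ((n.factorial : ℚ) * v ^ n) *
    laguerre (u / v) n = ((monicLaguerre v u n).map (algebraMap ℤ ℚ)).comp (C (-v : ℚ) * X) := by
  have hv' : (v : ℚ) ≠ 0 := Nat.cast_ne_zero.2 hv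
  rw [laguerre, monicLaguerre, Polynomial.map_sum, Polynomial.sum_comp, mul_sum]
  refine sum_congr rfl fun j hj => ?_
  rw [mem_range] at hj
  obtain ⟨d, rfl⟩ : ∃ d, n = j + d := ⟨n - j, by omega⟩
  have hprod : ∏ i ∈ Ioc j (j + d), ((v : ℚ) * (i : ℕ) + u) =
      v ^ d * ∏ i ∈ range d, ((u / v : ℚ) + (j + d : ℕ) - i) := by
    rw [← card_range d, ← prod_const, card_range, ← prod_mul_distrib]
    refine (prod_bij (fun i _ => j + d - i) ?_ ?_ ?_ ?_).symm
    · intro i hi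
      rw [mem_range] at hi
      rw [mem_Ioc]
      omega
    · intro i hi i' hi' h
      rw [mem_range] at hi hi'
      omega
    · intro i hi
      rw [mem_Ioc] at hi
      exact ⟨j + d - i, by rw [mem_range]; omega, by omega⟩
    · intro i hi
      rw [mem_range] at hi
      rw [Nat.cast_sub (by omega)]
      field_simp
      ring
  rw [Polynomial.map_mul, Polynomial.map_pow, map_X, map_C, mul_comp, C_comp, X_pow_comp, mul_pow,
    ← C_pow, ← mul_assoc, ← mul_assoc, ← C_mul, ← C_mul]
  congr 2
  simp only [algebraMap_int_eq, eq_intCast, Int.cast_mul, Int.cast_prod, Int.cast_add,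
    Int.cast_natCast]
  have hj0 : (j.factorial : ℚ) ≠ 0 := Nat.cast_ne_zero.2 (Nat.factorial_ne_zero j)
  have hd0 : (d.factorial : ℚ) ≠ 0 := Nat.cast_ne_zero.2 (Nat.factorial_ne_zero d)
  have hjd0 : ((j + d).factorial : ℚ) ≠ 0 := Nat.cast_ne_zero.2 (Nat.factorial_ne_zero (j + d))
  rw [hprod, Nat.add_sub_cancel_left, Nat.cast_add_choose, neg_pow (v : ℚ) j, pow_add]
  generalize ∏ i ∈ range d, ((u / v : ℚ) + (j + d : ℕ) - i) = P
  field_simp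

lemma irreducible_laguerre {v : ℕ} (hv : v ≠ 0) {u : ℤ} {n : ℕ}
    (h : Irreducible (monicLaguerre v u n)) : Irreducible (laguerre (u / v) n) := by
  have hv' : (v : ℚ) ≠ 0 := Nat.cast_ne_zero.2 hv
  have h1 := ((monic_monicLaguerre v u n).irreducible_iff_irreducible_map_fraction_map
    (K := ℚ)).1 h
  have h2 := irreducible_comp_C_mul_X (neg_ne_zero.2 hv') h1
  rw [← laguerre_eq hv] at h2
  refine (irreducible_isUnit_mul (isUnit_C.2 (IsUnit.mk0 _ ?_))).1 h2
  have := Nat.factorial_ne_zero n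
  positivity

lemma dvd_coeff_monicLaguerre_of_dvd_term {v : ℕ} {u : ℤ} {n p i : ℕ} (hi : i ≤ n)
    (h : (p : ℤ) ∣ (v : ℤ) * i + u) {j : ℕ} (hj : j < i) :
    (p : ℤ) ∣ (monicLaguerre v u n).coeff j := by
  rw [coeff_monicLaguerre]
  exact dvd_mul_of_dvd_right (h.trans
    (Finset.dvd_prod_of_mem (fun i : ℕ => (v : ℤ) * i + u) (mem_Ioc.2 ⟨hj, hi⟩))) _

lemma dvd_coeff_monicLaguerre_of_dvd {v : ℕ} {u : ℤ} {n p : ℕ} (hp : p.Prime) (hpv : ¬ p ∣ v)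
    (h : p ∣ n) {j : ℕ} (hj : j < n) : (p : ℤ) ∣ (monicLaguerre v u n).coeff j := by
  by_cases hc : p ∣ n.choose j
  · rw [coeff_monicLaguerre]
    exact dvd_mul_of_dvd_left (Int.natCast_dvd_natCast.2 hc) _
  · have hmul : n.choose j * (n - j) = n * (n - 1).choose j := by
      obtain ⟨m, rfl⟩ : ∃ m, n = m + 1 := ⟨n - 1, by omega⟩
      rw [← Nat.choose_mul_succ_eq, Nat.add_sub_cancel, mul_comm]
    have hd : p ∣ n - j :=
      (hp.dvd_mul.1 (hmul ▸ dvd_mul_of_dvd_left h _)).resolve_left hc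
    have hle := Nat.le_of_dvd (by omega) hd
    have hcount := (apCount_bounds u hp.pos ((hp.coprime_iff_not_dvd).2 hpv) hj.le).2
    have hpos : 0 < apCount v u p j n := by
      by_contra! h0
      rw [Nat.le_zero.1 h0] at hcount
      omega
    obtain ⟨i, hi⟩ := card_pos.1 hpos
    rw [mem_filter, mem_Ioc] at hi
    exact dvd_coeff_monicLaguerre_of_dvd_term hi.1.2 hi.2 hi.1.1

lemma exists_prime_slope_large {v : ℕ} (hv : 1 ≤ v) {u : ℤ} (huv : IsCoprime (v : ℤ) u)
    (hne : ∀ i : ℕ, 1 ≤ i → (v : ℤ) * i + u ≠ 0) :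
    ∃ k₀ n₀ : ℕ, ∀ k n, k₀ ≤ k → n₀ ≤ n → 2 * k ≤ n → ExcludesFactor v u n k := by
  obtain ⟨k₀, n₀, h⟩ := exists_prime_dvd_apProd hv huv hne (1 + v + u.natAbs)
  refine ⟨k₀, n₀, fun k n hk hn hkn => ?_⟩
  obtain ⟨p, hp, hkp, hdvd, hndvd⟩ := h k n hk hn hkn
  have hpv : ¬ p ∣ v := fun hpv =>
    (hp.factorization_pos_of_dvd (apProd_ne_zero hne _ _) hdvd).ne'
      (factorization_apProd_eq_zero huv hp hpv _ _)
  obtain ⟨i, hi, hdi⟩ := (hp.prime.dvd_finsetProd_iff _).1 hdvd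
  rw [mem_Ioc] at hi
  refine ⟨p, n - i, hp, by omega, fun j hj => ?_, fun j hj =>
    mul_factorization_apProd_lt hne hp hpv rfl hkp hndvd hj⟩
  exact dvd_coeff_monicLaguerre_of_dvd_term hi.2 (Int.natCast_dvd.2 hdi) (by omega)

lemma mul_factorization_apProd_lt_of_lt {v : ℕ} (hv : 1 ≤ v) {u : ℤ}
    (hne : ∀ i : ℕ, 1 ≤ i → (v : ℤ) * i + u ≠ 0) {p k : ℕ} (hp : p.Prime)
    (h : v * (k + (1 + v + u.natAbs)) + u.natAbs < p) {j : ℕ} (hj : 1 ≤ j) :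
    k * (apProd v u 0 j).factorization p < j := by
  have h1 := Nat.le_mul_of_pos_left (k + (1 + v + u.natAbs)) hv
  exact mul_factorization_apProd_lt hne hp (fun hd => by have := Nat.le_of_dvd hv hd; omega) rfl
    (by omega) (not_dvd_apProd_of_lt hne hp h) hj

lemma finite_setOf_small_of_ne_zero {v : ℕ} (hv : 1 ≤ v) {u : ℤ} (hu : u ≠ 0)
    (hne : ∀ i : ℕ, 1 ≤ i → (v : ℤ) * i + u ≠ 0) (k₀ : ℕ) :
    {n : ℕ | ¬ ∀ k, 1 ≤ k → k < k₀ → 2 * k ≤ n → ExcludesFactor v u n k}.Finite := by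
  refine (finite_setOf_smooth_mul hv hu (v * (k₀ + (1 + v + u.natAbs)) + u.natAbs)).subset
    fun n hn => ?_
  contrapose hn
  simp only [Set.mem_ofPred_eq, not_forall, not_le, exists_prop] at hn
  obtain ⟨p, hp, hd, hlt⟩ := hn
  rw [Set.mem_ofPred_eq, not_not]
  intro k hk hkk _
  have hlt' : v * (k + (1 + v + u.natAbs)) + u.natAbs < p := by
    have := Nat.mul_le_mul_left v (show k + (1 + v + u.natAbs) ≤ k₀ + (1 + v + u.natAbs) by omega)
    omega
  have hpv : ¬ p ∣ v := fun hd => by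
    have h1 := Nat.le_of_dvd hv hd
    have h2 := Nat.le_mul_of_pos_left (k + (1 + v + u.natAbs)) hv
    omega
  refine ⟨p, 0, hp, hk, fun j hj => ?_, fun j hj => mul_factorization_apProd_lt_of_lt hv hne hp
    hlt' hj⟩
  rcases (Nat.prime_iff_prime_int.1 hp).dvd_mul.1 hd with h | h
  · exact dvd_coeff_monicLaguerre_of_dvd hp hpv (Int.natCast_dvd_natCast.1 h) hj
  · exact dvd_coeff_monicLaguerre_of_dvd_term le_rfl h hj

lemma finite_setOf_small_zero (k₀ : ℕ) :
    {n : ℕ | ¬ ∀ k, 1 ≤ k → k < k₀ → 2 * k ≤ n → ExcludesFactor 1 0 n k}.Finite := by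
  have hne : ∀ i : ℕ, 1 ≤ i → ((1 : ℕ) : ℤ) * i + 0 ≠ 0 := fun i hi => by
    push_cast
    omega
  refine (finite_setOf_smooth_mul (le_refl 1) (show (-1 : ℤ) ≠ 0 by norm_num) (k₀ + 2)).subset
    fun n hn => ?_
  contrapose hn
  simp only [Set.mem_ofPred_eq, not_forall, not_le, exists_prop] at hn
  obtain ⟨p, hp, hd, hlt⟩ := hn
  rw [Set.mem_ofPred_eq, not_not]
  intro k hk hkk hkn
  rcases eq_or_lt_of_le hk with rfl | hk2
  · obtain ⟨q, hq, hqn⟩ := Nat.exists_prime_and_dvd (show n ≠ 1 by omega)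
    refine ⟨q, 0, hq, hk, fun j hj => dvd_coeff_monicLaguerre_of_dvd_term le_rfl
      (by simpa using Int.natCast_dvd_natCast.2 hqn) hj, fun j hj => ?_⟩
    have hfact : apProd 1 0 0 j = j.factorial := by
      rw [apProd, ← prod_Ico_id_eq_factorial]
      refine prod_congr (by ext; simp [Nat.succ_le_iff]) fun i _ => ?_
      rw [Nat.cast_one, one_mul, add_zero, Int.natAbs_natCast]
    have : Fact q.Prime := ⟨hq⟩
    rw [hfact, one_mul, Nat.factorization_def _ hq]
    exact padicValNat_factorial_lt_of_ne_zero q (by omega)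
  · have hlt' : 1 * (k + (1 + 1 + (0 : ℤ).natAbs)) + (0 : ℤ).natAbs < p := by
      simp only [Int.natAbs_zero]
      omega
    rcases (Nat.prime_iff_prime_int.1 hp).dvd_mul.1 hd with h | h
    · exact ⟨p, 0, hp, hk, fun j hj => dvd_coeff_monicLaguerre_of_dvd_term le_rfl
        (by simpa using h) hj, fun j hj => mul_factorization_apProd_lt_of_lt le_rfl hne hp hlt' hj⟩
    · refine ⟨p, 1, hp, hk2, fun j hj => dvd_coeff_monicLaguerre_of_dvd_term (Nat.sub_le n 1) ?_ hj,
        fun j hj => mul_factorization_apProd_lt_of_lt le_rfl hne hp hlt' hj⟩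
      rw [Nat.cast_sub (by omega)]
      simpa [sub_eq_add_neg] using h

/-- Filaseta–Lam theorem: if `ν` is a rational number which is not a negative
integer, then for all but finitely many `k ∈ ℤ₊` the Laguerre polynomial
`L_k^ν` is irreducible over `ℚ`. -/
theorem laguerre_irreducible (ν : ℚ) (hν : ∀ m : ℕ, ν ≠ -((m : ℚ) + 1)) :
    {k : ℕ | ¬ Irreducible (laguerre ν k)}.Finite := by
  have hv : 1 ≤ ν.den := ν.pos
  have huv : IsCoprime (ν.den : ℤ) ν.num := (Rat.isCoprime_num_den ν).symm
  have hne : ∀ i : ℕ, 1 ≤ i → (ν.den : ℤ) * i + ν.num ≠ 0 := by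
    intro i hi h
    refine hν (i - 1) ?_
    have hden : (ν.den : ℚ) ≠ 0 := Nat.cast_ne_zero.2 ν.den_ne_zero
    rw [Nat.cast_sub hi, Nat.cast_one, sub_add_cancel]
    nth_rw 1 [← Rat.num_div_den ν]
    rw [div_eq_iff hden]
    have h' : (ν.den : ℚ) * i + ν.num = 0 := by exact_mod_cast h
    linear_combination h'
  obtain ⟨k₀, n₀, hlarge⟩ := exists_prime_slope_large hv huv hne
  have hsmall : {n : ℕ | ¬ ∀ k, 1 ≤ k → k < k₀ → 2 * k ≤ n →
      ExcludesFactor ν.den ν.num n k}.Finite := by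
    by_cases hu : ν.num = 0
    · rw [Rat.num_eq_zero] at hu
      subst hu
      exact finite_setOf_small_zero k₀
    · exact finite_setOf_small_of_ne_zero hv hu hne k₀
  refine (hsmall.union (Set.finite_lt_nat (n₀ + 1))).subset fun n hn => ?_
  contrapose hn
  simp only [Set.mem_union, Set.mem_ofPred_eq, not_or, not_not, not_lt] at hn ⊢
  obtain ⟨hs, hn0⟩ := hn
  rw [← Rat.num_div_den ν]
  refine irreducible_laguerre ν.den_ne_zero (irreducible_monicLaguerre hne (by omega) ?_)
  intro k hk hkn
  rcases lt_or_ge k k₀ with h | h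
  · exact hs k hk h hkn
  · exact hlarge k n h (by omega) hkn

end
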